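/- arXiv:2404.13763 — 3 statements merged into one kernel-verified Lean document; each statement's English description precedes it below -/
import Mathlib

section
/- For all integers b ≥ 2, the Kempner harmonic sum K(b,0) = I(b,0,0) satisfies, as b → ∞, K(b,0) = b·log b + ζ(2)/(2b) − ζ(3)/(3b²) − (2ζ(2) − ζ(4))/(4b³) − ((5/2)ζ(2) + ζ(5))/(5b⁴) + (5ζ(3) + ζ(6))/(6b⁵) + O(b⁻⁶). -/
open Filter Asymptotics

/-- The Irwin harmonic sum `I(b,d,k)`: sum of `1/m` over positive integers `m`
whose base-`b` digit list contains the digit `d` exactly `k` times. -/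
noncomputable def irwinSum (b d k : ℕ) : ℝ :=
  ∑' m : ℕ, if 0 < m ∧ (Nat.digits b m).count d = k then (1 : ℝ) / m else 0

/-- `ζ(s) = ∑_{n ≥ 1} n^{-s}` for an integer exponent. -/
noncomputable def zetaR (s : ℕ) : ℝ := ∑' n : ℕ, 1 / ((n : ℝ) + 1) ^ s

/-!
With `f n = log (n + 1) - log n`, the sum of `f` over the block `b m, …, b m + b - 1` telescopes to
`f m` for `m > 0`, and to `log b` for `m = 0` once the undefined term at `0` is dropped. Restricted
to integers without the digit `d`, this gives `∑ f (b m + d) = log b`, summed over `m = 0` and the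
positive integers without the digit `d`. For `d = 0` the terms are `log (1 + 1 / (b m))`, and
expanding the logarithm expresses the Kempner sum by `b log b` and the sums of `m ^ (-j)`, `j ≥ 2`,
over zero-free `m`. These differ from `ζ(j)` by the sums `R j` over integers having a zero digit.
Splitting off the last digit yields `R j = ζ(j) / b ^ j + ∑ 1 / (b m + a) ^ j`, over `m` having a
zero digit and `0 < a < b`. Expanding the last sum in `a / (b m)` determines `R j` recursively to
the required order.
-/

/-- The natural numbers none of whose base-`b` digits is `d`, together with `0`, whose digit list is
empty. Keeping `0` makes the set closed under appending digits other than `d`, and it contributes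
nothing to the sums below because `1 / 0 = 0`. -/
def digitFree (b d : ℕ) : Set ℕ := {m | d ∉ b.digits m}

/-- The power sum `∑ 1 / m ^ j` over `m ∈ A`; for `j ≠ 0` an element `0` of `A` contributes `0`. -/
noncomputable def powerSum (A : Set ℕ) (j : ℕ) : ℝ := ∑' m : A, 1 / ((m : ℕ) : ℝ) ^ j

/-- The increment `log (n + 1) - log n`, which telescopes over blocks of consecutive integers.
Since `Real.log 0 = 0`, its value at `0` is `0`. -/
noncomputable def logGap (n : ℕ) : ℝ := Real.log (n + 1) - Real.log n

section Blocks

open Finset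

theorem sum_range_mul_eq_sum_blocks {M : Type*} [AddCommMonoid M] (f : ℕ → M) (b n : ℕ) :
    ∑ k ∈ range (b * n), f k = ∑ m ∈ range n, ∑ a ∈ range b, f (b * m + a) := by
  induction n with
  | zero => simp
  | succ n ih => rw [Nat.mul_succ, sum_range_add, ih, sum_range_succ]

theorem hasSum_blocks {M : Type*} [AddCommMonoid M] [TopologicalSpace M] [ContinuousAdd M]
    [RegularSpace M] {f : ℕ → M} {s : M} {b : ℕ} (hb : b ≠ 0) (hf : HasSum f s) :
    HasSum (fun m ↦ ∑ a ∈ range b, f (b * m + a)) s := by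
  have : NeZero b := ⟨hb⟩
  have hprod := (Nat.divModEquiv b).symm.hasSum_iff.mpr hf
  convert hprod.prod_fiberwise fun m ↦ hasSum_fintype _ using 2 with m
  simp [sum_range, Nat.divModEquiv, mul_comm]

end Blocks

section Digits

open Finset

variable {b d : ℕ}

theorem zero_mem_digitFree (b d : ℕ) : 0 ∈ digitFree b d := by
  simp [digitFree]

theorem pos_of_mem_compl_digitFree {m : ℕ} (hm : m ∈ (digitFree b d)ᶜ) : 0 < m :=
  Nat.pos_of_ne_zero fun h ↦ hm (h ▸ zero_mem_digitFree b d)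

theorem mul_add_mem_digitFree_iff {m a : ℕ} (ha : a < b) (h : b * m + a ≠ 0) (hb : 1 < b) :
    b * m + a ∈ digitFree b d ↔ a ≠ d ∧ m ∈ digitFree b d := by
  have hdigits : b.digits (b * m + a) = a :: b.digits m := by
    rw [add_comm]
    exact Nat.digits_add b hb a m ha (by grind)
  simp [digitFree, hdigits, eq_comm]

theorem sum_indicator_digitFree_block (hb : 1 < b) {g : ℕ → ℝ} (hg : g 0 = 0) (m : ℕ) :
    ∑ a ∈ range b, (digitFree b d).indicator g (b * m + a) =
      (digitFree b d).indicator (fun m ↦ ∑ a ∈ (range b).erase d, g (b * m + a)) m := by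
  classical
  have hterm : ∀ a ∈ range b, (digitFree b d).indicator g (b * m + a) =
      if a ≠ d ∧ m ∈ digitFree b d then g (b * m + a) else 0 := by
    intro a ha
    rcases eq_or_ne (b * m + a) 0 with h | h
    · simp [h, hg]
    · simp only [Set.indicator_apply, mul_add_mem_digitFree_iff (mem_range.mp ha) h hb]
  rw [sum_congr rfl hterm, Set.indicator_apply]
  split_ifs with hm
  · simp only [hm, and_true, ← sum_filter, filter_ne']
  · simp [hm]

theorem sum_indicator_compl_digitFree_block (hb : 1 < b) (hd : d < b) {g : ℕ → ℝ} (hg : g 0 = 0)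
    (m : ℕ) :
    ∑ a ∈ range b, (digitFree b d)ᶜ.indicator g (b * m + a) =
      g (b * m + d) +
        (digitFree b d)ᶜ.indicator (fun m ↦ ∑ a ∈ (range b).erase d, g (b * m + a)) m := by
  simp only [Set.indicator_compl, Pi.sub_apply, sum_sub_distrib,
    sum_indicator_digitFree_block hb hg]
  rw [← add_sum_erase _ _ (mem_range.mpr hd)]
  ring

theorem hasSum_compl_digitFree_blocks (hb : 1 < b) (hd : d < b) {g : ℕ → ℝ} (hg : g 0 = 0)
    {s t : ℝ} (hs : HasSum (fun m : ↥(digitFree b d)ᶜ ↦ g m) s)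
    (ht : HasSum (fun m ↦ g (b * m + d)) t) :
    HasSum (fun m : ↥(digitFree b d)ᶜ ↦ ∑ a ∈ (range b).erase d, g (b * m + a)) (s - t) := by
  have hblocks := hasSum_blocks (b := b) (by lia) (hasSum_subtype_iff_indicator (f := g).mp hs)
  simp only [sum_indicator_compl_digitFree_block hb hd hg] at hblocks
  refine (hasSum_subtype_iff_indicator (f := fun m ↦ ∑ a ∈ (range b).erase d, g (b * m + a))).mpr ?_
  simpa only [add_sub_cancel_left] using hblocks.sub ht

end Digits

section LogSeries

open Finset

variable {b d : ℕ}

theorem logGap_zero : logGap 0 = 0 := by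
  simp [logGap]

theorem logGap_eq_log_one_add (n : ℕ) : logGap n = Real.log (1 + 1 / n) := by
  rcases eq_or_ne n 0 with rfl | hn
  · simp [logGap]
  · rw [logGap, ← Real.log_div (by positivity) (by positivity)]
    congr 1
    field_simp

theorem logGap_nonneg (n : ℕ) : 0 ≤ logGap n := by
  rw [logGap_eq_log_one_add]
  exact Real.log_nonneg (le_add_of_nonneg_right (by positivity))

theorem logGap_le_one_div (n : ℕ) : logGap n ≤ 1 / n := by
  rw [logGap_eq_log_one_add]
  linarith [Real.log_le_sub_one_of_pos (show (0 : ℝ) < 1 + 1 / n by positivity)]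

theorem one_div_add_one_le_logGap {n : ℕ} (hn : n ≠ 0) : 1 / ((n : ℝ) + 1) ≤ logGap n := by
  rw [logGap_eq_log_one_add]
  refine le_of_eq_of_le ?_ (Real.one_sub_inv_le_log_of_pos (by positivity))
  field_simp
  ring

theorem sum_logGap_block (hb : b ≠ 0) (m : ℕ) :
    ∑ a ∈ range b, logGap (b * m + a) = logGap m + if m = 0 then Real.log b else 0 := by
  have htelescope := sum_range_sub (fun a : ℕ ↦ Real.log ((b : ℝ) * m + a)) b
  have hsum : ∑ a ∈ range b, logGap (b * m + a) = Real.log (b * m + b) - Real.log (b * m) := by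
    simpa [logGap, add_assoc] using htelescope
  rw [hsum]
  rcases eq_or_ne m 0 with rfl | hm
  · simp [logGap]
  · rw [if_neg hm, add_zero, logGap, ← mul_add_one, Real.log_mul (by positivity) (by positivity),
      Real.log_mul (by positivity) (by positivity)]
    ring

theorem sum_range_logGap_digitFree (hb : 1 < b) (hd : d < b) {n : ℕ} (hn : 0 < n) :
    ∑ m ∈ range n, (digitFree b d).indicator (fun m ↦ logGap (b * m + d)) m =
      Real.log b + ∑ k ∈ range n, (digitFree b d).indicator logGap k
        - ∑ k ∈ range (b * n), (digitFree b d).indicator logGap k := by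
  have hblock (m : ℕ) : ∑ a ∈ (range b).erase d, logGap (b * m + a) =
      logGap m + (if m = 0 then Real.log b else 0) - logGap (b * m + d) := by
    rw [sum_erase_eq_sub (mem_range.mpr hd), sum_logGap_block (by lia)]
  have hterm (m : ℕ) : (digitFree b d).indicator
      (fun m ↦ ∑ a ∈ (range b).erase d, logGap (b * m + a)) m =
      (digitFree b d).indicator logGap m + (if m = 0 then Real.log b else 0)
        - (digitFree b d).indicator (fun m ↦ logGap (b * m + d)) m := by
    by_cases hm : m ∈ digitFree b d
    · simp only [Set.indicator_of_mem hm, hblock]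
    · simp [hm, (pos_of_mem_compl_digitFree hm).ne']
  simp_rw [sum_range_mul_eq_sum_blocks, sum_indicator_digitFree_block hb logGap_zero, hterm,
    sum_sub_distrib, sum_add_distrib, sum_ite_eq', mem_range, if_pos hn]
  ring

theorem summable_logGap_mul_add_digitFree (hb : 1 < b) (hd : d < b) :
    Summable fun m : digitFree b d ↦ logGap (b * m + d) := by
  have hnonneg (A : Set ℕ) {f : ℕ → ℝ} (hf : ∀ k, 0 ≤ f k) (m : ℕ) : 0 ≤ A.indicator f m :=
    Set.indicator_nonneg (fun k _ ↦ hf k) m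
  refine (summable_subtype_iff_indicator (f := fun m ↦ logGap (b * m + d))).mpr <|
    summable_of_sum_range_le (c := Real.log b) (hnonneg _ fun _ ↦ logGap_nonneg _) fun n ↦ ?_
  rcases n.eq_zero_or_pos with rfl | hn
  · simpa using Real.log_natCast_nonneg b
  · have hmono : ∑ k ∈ range n, (digitFree b d).indicator logGap k ≤
        ∑ k ∈ range (b * n), (digitFree b d).indicator logGap k :=
      sum_le_sum_of_subset_of_nonneg (range_subset_range.mpr (Nat.le_mul_of_pos_left n (by lia)))
        fun k _ _ ↦ hnonneg _ logGap_nonneg k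
    linarith [sum_range_logGap_digitFree hb hd hn]

theorem summable_one_div_digitFree (hb : 1 < b) (hd : d < b) :
    Summable fun m : digitFree b d ↦ 1 / ((m : ℕ) : ℝ) := by
  refine ((summable_logGap_mul_add_digitFree hb hd).mul_left (2 * b : ℝ)).of_nonneg_of_le
    (fun m ↦ by positivity) fun ⟨m, _⟩ ↦ ?_
  rcases eq_or_ne m 0 with rfl | hm
  · simpa using mul_nonneg (by positivity) (logGap_nonneg d)
  · have hbm : b * m + d + 1 ≤ 2 * b * m := by
      have := Nat.le_mul_of_pos_right b (Nat.pos_of_ne_zero hm)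
      lia
    have hbm' : (b : ℝ) * m + d + 1 ≤ 2 * b * m := mod_cast hbm
    calc 1 / (m : ℝ) = 2 * b * (1 / (2 * b * m)) := by field_simp
      _ ≤ 2 * b * (1 / (((b * m + d : ℕ) : ℝ) + 1)) := by push_cast; gcongr
      _ ≤ 2 * b * logGap (b * m + d) := by
        gcongr
        exact one_div_add_one_le_logGap (by positivity)

theorem hasSum_logGap_mul_add_digitFree (hb : 1 < b) (hd : d < b) :
    HasSum (fun m : digitFree b d ↦ logGap (b * m + d)) (Real.log b) := by
  have hlogGap : Summable fun m : digitFree b d ↦ logGap m :=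
    (summable_one_div_digitFree hb hd).of_nonneg_of_le (fun m ↦ logGap_nonneg m)
      fun m ↦ logGap_le_one_div m
  have hpartial :=
    (hasSum_subtype_iff_indicator (f := logGap).mp hlogGap.hasSum).tendsto_sum_nat
  have hdilated := hpartial.comp (tendsto_id.const_mul_atTop' (show 0 < b by lia))
  have hlim := (hpartial.const_add (Real.log b)).sub hdilated
  have hsum := (hasSum_subtype_iff_indicator (f := fun m ↦ logGap (b * m + d))).mp
    (summable_logGap_mul_add_digitFree hb hd).hasSum
  convert (summable_logGap_mul_add_digitFree hb hd).hasSum using 1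
  refine tendsto_nhds_unique ?_ hsum.tendsto_sum_nat
  rw [add_sub_cancel_right] at hlim
  refine hlim.congr' ?_
  filter_upwards [eventually_gt_atTop 0] with n hn
  exact (sum_range_logGap_digitFree hb hd hn).symm

end LogSeries

section PowerSum

theorem powerSum_nonneg (A : Set ℕ) (j : ℕ) : 0 ≤ powerSum A j :=
  tsum_nonneg fun _ ↦ by positivity

theorem irwinSum_zero_eq_powerSum (b d : ℕ) : irwinSum b d 0 = powerSum (digitFree b d) 1 := by
  rw [irwinSum, powerSum, tsum_subtype (digitFree b d) fun m : ℕ ↦ 1 / (m : ℝ) ^ 1]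
  refine tsum_congr fun m ↦ ?_
  rcases m.eq_zero_or_pos with rfl | hm
  · simp [Set.indicator_of_mem (zero_mem_digitFree b d)]
  · simp [Set.indicator_apply, digitFree, hm, List.count_eq_zero]

variable {j : ℕ}

theorem hasSum_zetaR (hj : 2 ≤ j) : HasSum (fun m : ℕ ↦ 1 / (m : ℝ) ^ j) (zetaR j) := by
  have hsummable : Summable fun m : ℕ ↦ 1 / (m : ℝ) ^ j := Real.summable_one_div_nat_pow.mpr hj
  convert hsummable.hasSum using 1
  rw [hsummable.tsum_eq_zero_add]
  simp [zetaR, show j ≠ 0 by lia]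

theorem hasSum_powerSum (A : Set ℕ) (hj : 2 ≤ j) :
    HasSum (fun m : A ↦ 1 / ((m : ℕ) : ℝ) ^ j) (powerSum A j) :=
  ((hasSum_zetaR hj).summable.subtype A).hasSum

theorem powerSum_add_powerSum_compl (A : Set ℕ) (hj : 2 ≤ j) :
    powerSum A j + powerSum Aᶜ j = zetaR j :=
  ((hasSum_zetaR hj).summable.tsum_subtype_add_tsum_subtype_compl A).trans (hasSum_zetaR hj).tsum_eq

theorem powerSum_le_zetaR (A : Set ℕ) (hj : 2 ≤ j) : powerSum A j ≤ zetaR j := by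
  linarith [powerSum_add_powerSum_compl A hj, powerSum_nonneg Aᶜ j]

end PowerSum

section LogExpansion

open Finset

theorem abs_log_one_add_sub_sum_le {x : ℝ} (hx : 0 ≤ x) (hx' : x ≤ 1 / 2) (n : ℕ) :
    |Real.log (1 + x) - ∑ i ∈ range n, (-1) ^ i / (i + 1) * x ^ (i + 1)| ≤ 2 * x ^ (n + 1) := by
  have htaylor := Real.abs_log_sub_add_sum_range_le (x := -x) (by grind) n
  have hsum : ∑ i ∈ range n, (-x) ^ (i + 1) / ((i : ℝ) + 1) =
      -∑ i ∈ range n, (-1) ^ i / ((i : ℝ) + 1) * x ^ (i + 1) := by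
    rw [← sum_neg_distrib]
    refine sum_congr rfl fun i _ ↦ ?_
    rw [neg_pow x]
    ring
  rw [hsum, sub_neg_eq_add, abs_neg, abs_of_nonneg hx, neg_add_eq_sub] at htaylor
  calc _ ≤ x ^ (n + 1) / (1 - x) := htaylor
    _ ≤ x ^ (n + 1) / (1 / 2) := by gcongr; linarith
    _ = 2 * x ^ (n + 1) := by ring

theorem hasSum_log_one_add_digitFree_zero {b : ℕ} (hb : 1 < b) :
    HasSum (fun m : digitFree b 0 ↦ Real.log (1 + (b : ℝ)⁻¹ * (1 / (m : ℕ)))) (Real.log b) := by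
  convert hasSum_logGap_mul_add_digitFree hb (show 0 < b by lia) using 2 with m
  rw [logGap_eq_log_one_add]
  push_cast
  congr 2
  ring

theorem abs_log_sub_sum_powerSum_le {b n : ℕ} (hb : 1 < b) (hn : n ≠ 0) :
    |Real.log b - ∑ i ∈ range n, (-1) ^ i / (i + 1) * (b : ℝ)⁻¹ ^ (i + 1) *
        powerSum (digitFree b 0) (i + 1)| ≤ 2 * (b : ℝ)⁻¹ ^ (n + 1) * zetaR (n + 1) := by
  have hpow (i : ℕ) : HasSum (fun m : digitFree b 0 ↦ 1 / ((m : ℕ) : ℝ) ^ (i + 1))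
      (powerSum (digitFree b 0) (i + 1)) := by
    rcases eq_or_ne i 0 with rfl | hi
    · refine Summable.hasSum ?_
      simpa using summable_one_div_digitFree hb (show 0 < b by lia)
    · exact hasSum_powerSum _ (by lia)
  have hremainder := (hasSum_log_one_add_digitFree_zero hb).sub <|
    hasSum_sum fun i (_ : i ∈ range n) ↦
      (hpow i).mul_left ((-1) ^ i / ((i : ℝ) + 1) * (b : ℝ)⁻¹ ^ (i + 1))
  refine (hremainder.norm_le_of_bounded ((hpow n).mul_left (2 * (b : ℝ)⁻¹ ^ (n + 1)))
    fun ⟨m, _⟩ ↦ ?_).trans ?_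
  · have hb' : (b : ℝ)⁻¹ ≤ 1 / 2 := by
      rw [one_div]
      exact inv_anti₀ two_pos (mod_cast hb)
    have hm : 1 / (m : ℝ) ≤ 1 := by simpa using Nat.cast_inv_le_one m
    have hx : (b : ℝ)⁻¹ * (1 / m) ≤ 1 / 2 := by
      simpa using mul_le_mul hb' hm (by positivity) (by norm_num)
    simpa only [mul_pow, one_div_pow, mul_assoc, Real.norm_eq_abs] using
      abs_log_one_add_sub_sum_le (by positivity) hx n
  · gcongr
    exact powerSum_le_zetaR _ (by lia)

theorem mul_sum_powerSum_eq_irwinSum_sub {b : ℕ} (hb : b ≠ 0) (n : ℕ) :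
    b * ∑ i ∈ range (n + 1), (-1) ^ i / (i + 1) * (b : ℝ)⁻¹ ^ (i + 1) *
        powerSum (digitFree b 0) (i + 1) =
      irwinSum b 0 0 - ∑ i ∈ range n,
        (-1) ^ i / (i + 2) * (b : ℝ)⁻¹ ^ (i + 1) * powerSum (digitFree b 0) (i + 2) := by
  have hterm (i : ℕ) : (b : ℝ) * ((-1) ^ (i + 1) / (((i + 1 : ℕ) : ℝ) + 1) *
      (b : ℝ)⁻¹ ^ (i + 1 + 1) * powerSum (digitFree b 0) (i + 1 + 1)) =
      -((-1) ^ i / (i + 2) * (b : ℝ)⁻¹ ^ (i + 1) * powerSum (digitFree b 0) (i + 2)) := by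
    rw [pow_succ (b : ℝ)⁻¹ (i + 1), pow_succ (-1 : ℝ)]
    push_cast
    field_simp
    ring
  rw [mul_sum, sum_range_succ', irwinSum_zero_eq_powerSum]
  simp only [hterm, sum_neg_distrib]
  simp [mul_inv_cancel_left₀ (show (b : ℝ) ≠ 0 from mod_cast hb), neg_add_eq_sub]

end LogExpansion

section PowerExpansion

open Finset

theorem one_sub_mul_le_one_div_one_add_pow {u : ℝ} (hu : 0 ≤ u) (j : ℕ) :
    1 - j * u ≤ 1 / (1 + u) ^ j := by
  induction j with
  | zero => simp
  | succ j ih =>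
    rw [pow_succ, ← div_div, le_div_iff₀ (by positivity)]
    push_cast
    have hsquare : 0 ≤ ((j : ℝ) + 1) * u ^ 2 := by positivity
    linarith

theorem one_div_one_add_pow_le {u : ℝ} (hu : 0 ≤ u) (j : ℕ) :
    1 / (1 + u) ^ j ≤ 1 - j * u + j * (j + 1) / 2 * u ^ 2 := by
  induction j with
  | zero => simp
  | succ j ih =>
    rw [pow_succ, ← div_div, div_le_iff₀ (by positivity)]
    push_cast
    have hcube : 0 ≤ ((j : ℝ) + 1) * (j + 2) / 2 * u ^ 3 := by positivity
    linarith

theorem abs_one_div_add_pow_sub_le {x a : ℝ} (hx : 0 < x) (ha : 0 ≤ a) (j : ℕ) :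
    |1 / (x + a) ^ j - 1 / x ^ j + j * a / x ^ (j + 1)| ≤
      j * (j + 1) / 2 * a ^ 2 / x ^ (j + 2) := by
  have hlower := one_sub_mul_le_one_div_one_add_pow (div_nonneg ha hx.le) j
  have hupper := one_div_one_add_pow_le (div_nonneg ha hx.le) j
  have hscale : 1 / (x + a) ^ j - 1 / x ^ j + j * a / x ^ (j + 1) =
      1 / x ^ j * (1 / (1 + a / x) ^ j - 1 + j * (a / x)) := by
    rw [show x + a = x * (1 + a / x) by field_simp, mul_pow, pow_succ]
    generalize (1 + a / x) ^ j = y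
    field_simp
  rw [hscale, abs_of_nonneg (mul_nonneg (by positivity) (by linarith))]
  calc _ ≤ 1 / x ^ j * (j * (j + 1) / 2 * (a / x) ^ 2) := by gcongr; linarith
    _ = _ := by
      rw [pow_add]
      field_simp

theorem abs_sum_one_div_add_pow_sub_le {x : ℝ} (hx : 0 < x) {b : ℕ} (hb : 0 < b) (j : ℕ) :
    |∑ a ∈ (range b).erase 0, 1 / (x + a) ^ j - (b - 1) / x ^ j +
        j * (b * (b - 1) / 2) / x ^ (j + 1)| ≤ j * (j + 1) / 2 * b ^ 3 / x ^ (j + 2) := by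
  have hgauss : ∑ a ∈ range b, (a : ℝ) = b * (b - 1) / 2 := by
    have htwice := congrArg (Nat.cast (R := ℝ)) (sum_range_id_mul_two b)
    push_cast [Nat.cast_pred hb] at htwice
    linarith
  have hsum : ∑ a ∈ (range b).erase 0, 1 / (x + a) ^ j - (b - 1) / x ^ j +
        j * (b * (b - 1) / 2) / x ^ (j + 1) =
      ∑ a ∈ range b, (1 / (x + a) ^ j - 1 / x ^ j + j * a / x ^ (j + 1)) := by
    simp only [sum_erase_eq_sub (mem_range.mpr hb), sum_add_distrib, sum_sub_distrib, sum_const,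
      card_range, nsmul_eq_mul, ← sum_div, ← mul_sum, hgauss, Nat.cast_zero, add_zero]
    ring
  rw [hsum]
  calc _ ≤ ∑ a ∈ range b, |1 / (x + a) ^ j - 1 / x ^ j + j * a / x ^ (j + 1)| :=
        abs_sum_le_sum_abs _ _
    _ ≤ ∑ a ∈ range b, (j * (j + 1) / 2 * b ^ 2 / x ^ (j + 2) : ℝ) := by
        refine sum_le_sum fun a ha ↦ (abs_one_div_add_pow_sub_le hx a.cast_nonneg j).trans ?_
        have : (a : ℝ) ≤ b := mod_cast (mem_range.mp ha).le
        gcongr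
    _ = _ := by
        rw [sum_const, card_range, nsmul_eq_mul]
        ring

end PowerExpansion

section ZeroDigit

open Finset

variable {b j : ℕ}

theorem hasSum_powerSum_compl_digitFree_zero_sub (hb : 1 < b) (hj : 2 ≤ j) :
    HasSum (fun m : ↥(digitFree b 0)ᶜ ↦ ∑ a ∈ (range b).erase 0, 1 / ((b : ℝ) * (m : ℕ) + a) ^ j)
      (powerSum (digitFree b 0)ᶜ j - zetaR j * (b : ℝ)⁻¹ ^ j) := by
  have hmultiples : HasSum (fun m : ℕ ↦ 1 / ((b * m + 0 : ℕ) : ℝ) ^ j)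
      (zetaR j * (b : ℝ)⁻¹ ^ j) := by
    simpa [mul_pow, mul_comm] using (hasSum_zetaR hj).mul_right ((b : ℝ)⁻¹ ^ j)
  simpa using hasSum_compl_digitFree_blocks hb (by lia) (g := fun m ↦ 1 / (m : ℝ) ^ j)
    (by simp [show j ≠ 0 by lia]) (hasSum_powerSum _ hj) hmultiples

theorem powerSum_compl_digitFree_zero_sub_nonneg (hb : 1 < b) (hj : 2 ≤ j) :
    0 ≤ powerSum (digitFree b 0)ᶜ j - zetaR j * (b : ℝ)⁻¹ ^ j :=
  (hasSum_powerSum_compl_digitFree_zero_sub hb hj).nonneg fun _ ↦ sum_nonneg fun _ _ ↦ by positivity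

theorem powerSum_compl_digitFree_zero_sub_le (hb : 1 < b) (hj : 2 ≤ j) :
    powerSum (digitFree b 0)ᶜ j - zetaR j * (b : ℝ)⁻¹ ^ j ≤
      (b - 1) * (b : ℝ)⁻¹ ^ j * powerSum (digitFree b 0)ᶜ j := by
  refine hasSum_le (fun ⟨m, hm⟩ ↦ ?_) (hasSum_powerSum_compl_digitFree_zero_sub hb hj)
    ((hasSum_powerSum _ hj).mul_left _)
  have hm := pos_of_mem_compl_digitFree hm
  calc ∑ a ∈ (range b).erase 0, 1 / ((b : ℝ) * m + a) ^ j
      ≤ ∑ a ∈ (range b).erase 0, 1 / ((b : ℝ) * m) ^ j := by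
        gcongr
        exact le_add_of_nonneg_right (Nat.cast_nonneg _)
    _ = (b - 1) * (b : ℝ)⁻¹ ^ j * (1 / (m : ℝ) ^ j) := by
        rw [sum_const, card_erase_of_mem (mem_range.mpr (by lia)), card_range, nsmul_eq_mul,
          Nat.cast_pred (by lia), mul_pow, inv_pow]
        field_simp

theorem powerSum_compl_digitFree_zero_le (hb : 1 < b) (hj : 2 ≤ j) :
    powerSum (digitFree b 0)ᶜ j ≤ 2 * zetaR j * (b : ℝ)⁻¹ ^ j := by
  have hb' : (2 : ℝ) ≤ b := mod_cast hb
  have hcoeff : ((b : ℝ) - 1) * (b : ℝ)⁻¹ ^ j ≤ 1 / 2 := by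
    calc ((b : ℝ) - 1) * (b : ℝ)⁻¹ ^ j ≤ (b - 1) * (b : ℝ)⁻¹ ^ 2 := by
          gcongr ?_ * ?_
          · linarith
          · exact pow_le_pow_of_le_one (by positivity) (inv_le_one_of_one_le₀ (by linarith)) hj
      _ ≤ 1 / 2 := by
          rw [inv_pow, ← div_eq_mul_inv, div_le_iff₀ (by positivity)]
          nlinarith
  have hself := mul_le_mul_of_nonneg_right hcoeff (powerSum_nonneg (digitFree b 0)ᶜ j)
  linarith [powerSum_compl_digitFree_zero_sub_le hb hj]

theorem abs_powerSum_compl_digitFree_zero_sub_le (hb : 1 < b) (hj : 2 ≤ j) :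
    |powerSum (digitFree b 0)ᶜ j - zetaR j * (b : ℝ)⁻¹ ^ j
        - (b - 1) * (b : ℝ)⁻¹ ^ j * powerSum (digitFree b 0)ᶜ j
        + j * (b * (b - 1) / 2) * (b : ℝ)⁻¹ ^ (j + 1) * powerSum (digitFree b 0)ᶜ (j + 1)| ≤
      j * (j + 1) / 2 * b ^ 3 * (b : ℝ)⁻¹ ^ (j + 2) * powerSum (digitFree b 0)ᶜ (j + 2) := by
  have hsum := ((hasSum_powerSum_compl_digitFree_zero_sub hb hj).sub
    ((hasSum_powerSum (digitFree b 0)ᶜ hj).mul_left (((b : ℝ) - 1) * (b : ℝ)⁻¹ ^ j))).add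
    ((hasSum_powerSum (digitFree b 0)ᶜ (show 2 ≤ j + 1 by lia)).mul_left
      (j * ((b : ℝ) * (b - 1) / 2) * (b : ℝ)⁻¹ ^ (j + 1)))
  refine hsum.norm_le_of_bounded
    ((hasSum_powerSum (digitFree b 0)ᶜ (show 2 ≤ j + 2 by lia)).mul_left _) fun ⟨m, hm⟩ ↦ ?_
  have hbm : (0 : ℝ) < b * m :=
    mod_cast Nat.mul_pos (by lia) (pos_of_mem_compl_digitFree hm)
  have hscale (y : ℝ) (k : ℕ) : y / ((b : ℝ) * m) ^ k = y * (b : ℝ)⁻¹ ^ k * (1 / (m : ℝ) ^ k) := by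
    rw [mul_pow, inv_pow]
    field_simp
  simpa only [hscale _ j, hscale _ (j + 1), hscale _ (j + 2), Real.norm_eq_abs] using
    abs_sum_one_div_add_pow_sub_le hbm (show 0 < b by lia) j

end ZeroDigit

section Asymptotics

theorem isBigO_inv_pow_of_le {m n : ℕ} (h : m ≤ n) :
    (fun b : ℕ ↦ (b : ℝ)⁻¹ ^ n) =O[atTop] fun b : ℕ ↦ (b : ℝ)⁻¹ ^ m :=
  .of_norm_le fun b ↦ by
    rw [Real.norm_of_nonneg (by positivity)]
    exact pow_le_pow_of_le_one (by positivity) (Nat.cast_inv_le_one b) h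

theorem isBigO_mul_inv_pow {f g : ℕ → ℝ} {k m n : ℕ}
    (hf : f =O[atTop] fun b : ℕ ↦ (b : ℝ)⁻¹ ^ m) (hg : g =O[atTop] fun b : ℕ ↦ (b : ℝ)⁻¹ ^ n)
    (h : k ≤ m + n) : (fun b ↦ f b * g b) =O[atTop] fun b : ℕ ↦ (b : ℝ)⁻¹ ^ k := by
  refine (hf.mul hg).trans ?_
  simpa only [← pow_add] using isBigO_inv_pow_of_le h

theorem isBigO_const_mul_inv_pow (c : ℝ) {m n : ℕ} (h : m ≤ n) :
    (fun b : ℕ ↦ c * (b : ℝ)⁻¹ ^ n) =O[atTop] fun b : ℕ ↦ (b : ℝ)⁻¹ ^ m :=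
  (isBigO_inv_pow_of_le h).const_mul_left c

theorem isBigO_irwinSum_zero_sub_sum_powerSum (n : ℕ) :
    (fun b : ℕ ↦ irwinSum b 0 0 - (b * Real.log b + ∑ i ∈ Finset.range n,
        (-1) ^ i / (i + 2) * (b : ℝ)⁻¹ ^ (i + 1) * powerSum (digitFree b 0) (i + 2)))
      =O[atTop] fun b : ℕ ↦ (b : ℝ)⁻¹ ^ (n + 1) := by
  refine .of_bound (2 * zetaR (n + 2)) ?_
  filter_upwards [eventually_gt_atTop 1] with b hb
  have hlog := abs_log_sub_sum_powerSum_le hb n.succ_ne_zero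
  have hscale := mul_sum_powerSum_eq_irwinSum_sub (show b ≠ 0 by lia) n
  rw [← sub_sub, sub_right_comm, ← hscale, ← mul_sub, norm_mul, norm_sub_rev, Real.norm_natCast,
    Real.norm_eq_abs, Real.norm_of_nonneg (by positivity)]
  calc (b : ℝ) * |_| ≤ b * (2 * (b : ℝ)⁻¹ ^ (n + 2) * zetaR (n + 2)) := by gcongr
    _ = 2 * zetaR (n + 2) * (b : ℝ)⁻¹ ^ (n + 1) := by
      rw [pow_succ (b : ℝ)⁻¹ (n + 1)]
      field_simp

variable {j : ℕ}

theorem isBigO_powerSum_compl_digitFree_zero (hj : 2 ≤ j) :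
    (fun b : ℕ ↦ powerSum (digitFree b 0)ᶜ j) =O[atTop] fun b : ℕ ↦ (b : ℝ)⁻¹ ^ j := by
  refine .of_bound (2 * zetaR j) ?_
  filter_upwards [eventually_gt_atTop 1] with b hb
  rw [Real.norm_of_nonneg (powerSum_nonneg _ _), Real.norm_of_nonneg (by positivity)]
  exact powerSum_compl_digitFree_zero_le hb hj

theorem isBigO_powerSum_compl_digitFree_zero_sub (hj : 2 ≤ j) :
    (fun b : ℕ ↦ powerSum (digitFree b 0)ᶜ j - zetaR j * (b : ℝ)⁻¹ ^ j)
      =O[atTop] fun b : ℕ ↦ (b : ℝ)⁻¹ ^ (2 * j - 1) := by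
  refine (IsBigO.of_norm_eventuallyLE ?_).trans <| isBigO_mul_inv_pow
    (isBigO_inv_pow_of_le (le_refl (j - 1))) (isBigO_powerSum_compl_digitFree_zero hj) (by lia)
  filter_upwards [eventually_gt_atTop 1] with b hb
  rw [Real.norm_of_nonneg (powerSum_compl_digitFree_zero_sub_nonneg hb hj)]
  refine (powerSum_compl_digitFree_zero_sub_le hb hj).trans
    (mul_le_mul_of_nonneg_right ?_ (powerSum_nonneg _ _))
  calc ((b : ℝ) - 1) * (b : ℝ)⁻¹ ^ j ≤ b * (b : ℝ)⁻¹ ^ j := by gcongr; linarith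
    _ = (b : ℝ)⁻¹ ^ (j - 1) := by
      rw [← mul_pow_sub_one (show j ≠ 0 by lia), mul_inv_cancel_left₀ (by positivity)]

theorem isBigO_powerSum_compl_digitFree_zero_two_recursion :
    (fun b : ℕ ↦ powerSum (digitFree b 0)ᶜ 2 - zetaR 2 * (b : ℝ)⁻¹ ^ 2
        - ((b : ℝ)⁻¹ - (b : ℝ)⁻¹ ^ 2) *
          (powerSum (digitFree b 0)ᶜ 2 - powerSum (digitFree b 0)ᶜ 3))
      =O[atTop] fun b : ℕ ↦ (b : ℝ)⁻¹ ^ 5 := by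
  refine (IsBigO.of_norm_eventuallyLE ?_).trans <|
    isBigO_mul_inv_pow (isBigO_const_mul_inv_pow 3 (le_refl 1))
      (isBigO_powerSum_compl_digitFree_zero (j := 4) (by lia)) le_rfl
  filter_upwards [eventually_gt_atTop 1] with b hb
  have hb' : (b : ℝ) ≠ 0 := by positivity
  have hrec := abs_powerSum_compl_digitFree_zero_sub_le hb le_rfl
  push_cast at hrec
  convert hrec using 1
  · rw [Real.norm_eq_abs]
    congr 1
    field_simp
    ring
  · field_simp
    ring

theorem isBigO_powerSum_compl_digitFree_zero_two_expansion :
    (fun b : ℕ ↦ powerSum (digitFree b 0)ᶜ 2 -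
        (zetaR 2 * (b : ℝ)⁻¹ ^ 2 + zetaR 2 * (b : ℝ)⁻¹ ^ 3 - zetaR 3 * (b : ℝ)⁻¹ ^ 4))
      =O[atTop] fun b : ℕ ↦ (b : ℝ)⁻¹ ^ 5 := by
  have hrec := isBigO_powerSum_compl_digitFree_zero_two_recursion
  have hinv : (fun b : ℕ ↦ (b : ℝ)⁻¹) =O[atTop] fun b : ℕ ↦ (b : ℝ)⁻¹ ^ 1 := by
    simpa only [pow_one] using isBigO_refl _ _
  have hR₂ := isBigO_powerSum_compl_digitFree_zero_sub (j := 2) le_rfl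
  have hR₃ := isBigO_powerSum_compl_digitFree_zero (j := 3) (by lia)
  have hR₃' := isBigO_powerSum_compl_digitFree_zero_sub (j := 3) (by lia)
  have hcoeff : (fun b : ℕ ↦ (b : ℝ)⁻¹ - (b : ℝ)⁻¹ ^ 2) =O[atTop] fun b : ℕ ↦ (b : ℝ)⁻¹ ^ 1 :=
    hinv.sub (isBigO_inv_pow_of_le one_le_two)
  -- Feeding each approximation of the sum back into its recursion gains one power of `1 / b`.
  have hthird : (fun b : ℕ ↦ powerSum (digitFree b 0)ᶜ 2 -
      (zetaR 2 * (b : ℝ)⁻¹ ^ 2 + zetaR 2 * (b : ℝ)⁻¹ ^ 3))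
      =O[atTop] fun b : ℕ ↦ (b : ℝ)⁻¹ ^ 4 := by
    refine (((hrec.trans (isBigO_inv_pow_of_le (by lia))).add
      (isBigO_mul_inv_pow hcoeff hR₂ le_rfl)).sub (isBigO_mul_inv_pow hcoeff hR₃ le_rfl)).sub
      (isBigO_const_mul_inv_pow (zetaR 2) le_rfl) |>.congr_left fun b ↦ ?_
    ring
  refine (((hrec.add (isBigO_mul_inv_pow hcoeff hthird le_rfl)).sub
    (isBigO_mul_inv_pow hcoeff hR₃' (by lia))).add
    (isBigO_const_mul_inv_pow (zetaR 3 - zetaR 2) le_rfl)).congr_left fun b ↦ ?_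
  ring

end Asymptotics

theorem kempner_zero_asymptotic :
    (fun b : ℕ => irwinSum b 0 0 -
      ((b : ℝ) * Real.log b + zetaR 2 / (2 * b) - zetaR 3 / (3 * (b : ℝ) ^ 2)
        - (2 * zetaR 2 - zetaR 4) / (4 * (b : ℝ) ^ 3)
        - (5 / 2 * zetaR 2 + zetaR 5) / (5 * (b : ℝ) ^ 4)
        + (5 * zetaR 3 + zetaR 6) / (6 * (b : ℝ) ^ 5)))
      =O[atTop] fun b : ℕ => ((b : ℝ) ^ 6)⁻¹ := by
  have hmoments := isBigO_irwinSum_zero_sub_sum_powerSum 5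
  have h₂ := isBigO_mul_inv_pow (k := 6) (isBigO_const_mul_inv_pow (1 / 2) (le_refl 1))
    isBigO_powerSum_compl_digitFree_zero_two_expansion (by lia)
  have h₃ := isBigO_mul_inv_pow (k := 6) (isBigO_const_mul_inv_pow (1 / 3) (le_refl 2))
    (isBigO_powerSum_compl_digitFree_zero_sub (j := 3) (by lia)) (by lia)
  have htail (j : ℕ) (hj : 4 ≤ j) := isBigO_mul_inv_pow (k := 6)
    (isBigO_const_mul_inv_pow (1 / j) (le_refl (j - 1)))
    (isBigO_powerSum_compl_digitFree_zero (by lia))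
    (show 6 ≤ j - 1 + j by lia)
  simp only [← inv_pow]
  refine (((((hmoments.sub h₂).add h₃).sub (htail 4 (by lia))).add (htail 5 (by lia))).sub
    (htail 6 (by lia))).congr_left fun b ↦ ?_
  have hcompl (j : ℕ) (hj : 2 ≤ j) :
      powerSum (digitFree b 0) j = zetaR j - powerSum (digitFree b 0)ᶜ j :=
    eq_sub_of_add_eq (powerSum_add_powerSum_compl _ hj)
  simp (discharger := lia) only [Finset.sum_range_succ, Finset.sum_range_zero, Nat.reduceAdd,
    hcompl]
  push_cast
  ring
end

section
/- For all integers b ≥ 2, as b → ∞, K(b,0) = b·log b + b·log Γ(1 + 1/b) + γ − ζ(2)/(2b(b² − b + 1)) + 5ζ(3)/(6b⁵) + O(b⁻⁶), where Γ is the real Gamma function and γ is the Euler–Mascheroni constant. -/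
open Filter Asymptotics

/-!
Burnol's measure `μ`, which puts mass `b ^ (-|w|)` at `0.w` for each word `w` of nonzero digits,
turns the Kempner sum into `∫ 1 / x dμ`. Self-similarity of `μ` together with Gauss's multiplication
formula for the digamma function `ψ` rewrites this integral as
`b log b + γ + b⁻¹ ∫ ψ (1 + x / b) dμ`. Replacing `μ` by Lebesgue measure of mass `b` on `[0, 1]`
gives `b log Γ (1 + 1 / b)` in place of the last term. The resulting discrepancy is evaluated on the
quadratic Taylor polynomial of `ψ (1 + x / b)`, the first moments of `μ` being rational in `b`. On
an `L`-Lipschitz function it is `O(L / b)`, because averaging over the `b` inverse branches of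
`x ↦ b x mod 1` divides `L` by `b` and changes the discrepancy by `O(L / b)` only; this handles the
Taylor remainder.
-/

namespace Kempner

open MeasureTheory Set Topology
open scoped ENNReal

lemma add_div_mem_Icc {a b : ℕ} (hab : a < b) {x : ℝ} (hx : x ∈ Icc (0 : ℝ) 1) :
    (a + x) / b ∈ Icc (0 : ℝ) 1 := by
  have hb : (0 : ℝ) < b := by exact_mod_cast Nat.zero_lt_of_lt hab
  have ha : (a : ℝ) + 1 ≤ b := by exact_mod_cast hab
  exact ⟨div_nonneg (add_nonneg a.cast_nonneg hx.1) hb.le, (div_le_one hb).2 (by linarith [hx.2])⟩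

section Words

variable {b : ℕ}

/-- The integer whose base-`b` digits, from the leading one on, are the letters of `w`. The letters
are nonzero, so these are the positive integers without the digit `0`, together with the value `0`
of the empty word. -/
def wordValue (w : List (Finset.Ico 1 b)) : ℕ := Nat.ofDigits b (w.map Subtype.val).reverse

/-- The number `0.w` in base `b`. -/
noncomputable def wordFraction (w : List (Finset.Ico 1 b)) : ℝ := wordValue w / (b : ℝ) ^ w.length

lemma wordValue_cons (a : Finset.Ico 1 b) (w : List (Finset.Ico 1 b)) :
    wordValue (a :: w) = wordValue w + b ^ w.length * a := by
  simp [wordValue, Nat.ofDigits_append]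

lemma wordFraction_nil : wordFraction ([] : List (Finset.Ico 1 b)) = 0 := by
  simp [wordFraction, wordValue]

lemma wordFraction_cons [NeZero b] (a : Finset.Ico 1 b) (w : List (Finset.Ico 1 b)) :
    wordFraction (a :: w) = ((a : ℕ) + wordFraction w) / b := by
  have hb : (b : ℝ) ≠ 0 := NeZero.ne _
  simp only [wordFraction, wordValue_cons, List.length_cons]
  push_cast
  field_simp
  ring

lemma wordFraction_mem_Icc [NeZero b] (w : List (Finset.Ico 1 b)) :
    wordFraction w ∈ Icc (0 : ℝ) 1 := by
  induction w with
  | nil => simp [wordFraction_nil]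
  | cons a w ih =>
    rw [wordFraction_cons]
    exact add_div_mem_Icc (Finset.mem_Ico.1 a.2).2 ih

lemma digits_wordValue (hb : 1 < b) (w : List (Finset.Ico 1 b)) :
    Nat.digits b (wordValue w) = (w.map Subtype.val).reverse := by
  have letter_mem : ∀ d ∈ (w.map Subtype.val).reverse, d ∈ Finset.Ico 1 b := by
    intro d hd
    obtain ⟨a, -, rfl⟩ := List.mem_map.1 (List.mem_reverse.1 hd)
    exact a.2
  refine Nat.digits_ofDigits b hb _ (fun d hd => (Finset.mem_Ico.1 (letter_mem d hd)).2)
    fun h => ?_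
  exact (Nat.one_le_iff_ne_zero.1 (Finset.mem_Ico.1 (letter_mem _ (List.getLast_mem h))).1)

lemma wordValue_injective (hb : 1 < b) :
    Function.Injective (wordValue : List (Finset.Ico 1 b) → ℕ) := by
  intro v w hvw
  have hdigits := congrArg (Nat.digits b) hvw
  rw [digits_wordValue hb, digits_wordValue hb, List.reverse_inj] at hdigits
  exact Subtype.val_injective.list_map hdigits

lemma count_zero_digits_wordValue (hb : 1 < b) (w : List (Finset.Ico 1 b)) :
    (Nat.digits b (wordValue w)).count 0 = 0 := by
  rw [digits_wordValue hb, List.count_eq_zero]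
  simp

lemma exists_wordValue_eq (hb : 1 < b) {m : ℕ} (hm : (Nat.digits b m).count 0 = 0) :
    ∃ w : List (Finset.Ico 1 b), wordValue w = m := by
  have digit_mem : ∀ d ∈ (Nat.digits b m).reverse, d ∈ Finset.Ico 1 b := by
    intro d hd
    rw [List.mem_reverse] at hd
    have hd_ne : d ≠ 0 := fun h => List.count_eq_zero.1 hm (h ▸ hd)
    exact Finset.mem_Ico.2 ⟨Nat.one_le_iff_ne_zero.2 hd_ne, Nat.digits_lt_base hb hd⟩
  lift (Nat.digits b m).reverse to List (Finset.Ico 1 b) using digit_mem with w hw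
  exact ⟨w, by rw [wordValue, hw, List.reverse_reverse, Nat.ofDigits_digits]⟩

lemma irwinSum_zero_zero_eq_tsum (hb : 1 < b) :
    irwinSum b 0 0 = ∑' w : List (Finset.Ico 1 b), 1 / (wordValue w : ℝ) := by
  have summand_wordValue (w : List (Finset.Ico 1 b)) :
      (if 0 < wordValue w ∧ (Nat.digits b (wordValue w)).count 0 = 0
        then (1 : ℝ) / wordValue w else 0) = 1 / (wordValue w : ℝ) := by
    rcases Nat.eq_zero_or_pos (wordValue w) with h | h
    · simp [h]
    · rw [if_pos ⟨h, count_zero_digits_wordValue hb w⟩]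
  rw [irwinSum, ← (wordValue_injective hb).tsum_eq]
  · exact tsum_congr summand_wordValue
  · intro m hm
    rw [Function.mem_support, ne_eq, ite_eq_right_iff, Classical.not_imp] at hm
    exact exists_wordValue_eq hb hm.1.2

end Words

section Measure

variable {b : ℕ}

lemma tsum_list {α : Type*} [Fintype α] {f : List α → ℝ} (hf : Summable f) :
    ∑' w, f w = f [] + ∑ a, ∑' w, f (a :: w) := by
  let consEquiv : Unit ⊕ α × List α ≃ List α :=
    { toFun := Sum.elim (fun _ => []) fun p => p.1 :: p.2
      invFun := fun w => w.casesOn (Sum.inl ()) fun a w => Sum.inr (a, w)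
      left_inv := by rintro (- | -) <;> rfl
      right_inv := by rintro (- | -) <;> rfl }
  have hsum : Summable (f ∘ consEquiv) := consEquiv.summable_iff.2 hf
  have hcons : Summable fun p : α × List α => f (p.1 :: p.2) :=
    hsum.comp_injective Sum.inr_injective
  calc ∑' w, f w = ∑' p, (f ∘ consEquiv) p := (consEquiv.tsum_eq f).symm
    _ = ∑' _ : Unit, f [] + ∑' p : α × List α, f (p.1 :: p.2) :=
        (hsum.comp_injective Sum.inl_injective).tsum_sum hcons
    _ = f [] + ∑ a, ∑' w, f (a :: w) := by
        rw [hcons.tsum_prod, tsum_fintype, tsum_fintype]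
        simp

/-- Burnol's measure on the zero-free expansions in base `b`: every word `w` without the digit `0`
puts the mass `b ^ (-|w|)` at the point `0.w`. Hence `∫ 1 / x` is the Kempner sum, the empty word
contributing `1 / 0 = 0`. -/
noncomputable def kempnerMeasure (b : ℕ) : Measure ℝ :=
  Measure.sum fun w : List (Finset.Ico 1 b) =>
    ((b : ℝ≥0∞) ^ w.length)⁻¹ • Measure.dirac (wordFraction w)

lemma kempnerMeasure_univ (b : ℕ) [NeZero b] : kempnerMeasure b univ = b := by
  have hb : (b : ℝ≥0∞) ≠ 0 := NeZero.ne _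
  have hb' : (b : ℝ≥0∞) ≠ ∞ := ENNReal.natCast_ne_top b
  calc kempnerMeasure b univ
      = ∑' w : List (Finset.Ico 1 b), ((b : ℝ≥0∞) ^ w.length)⁻¹ := by
        simp [kempnerMeasure, Measure.sum_apply]
    _ = ∑' (n : ℕ) (_ : Fin n → Finset.Ico 1 b), ((b : ℝ≥0∞) ^ n)⁻¹ := by
        rw [← List.equivSigmaTuple.symm.tsum_eq, ENNReal.tsum_sigma']
        simp [List.equivSigmaTuple]
    _ = ∑' n : ℕ, (((b - 1 : ℕ) : ℝ≥0∞) * (b : ℝ≥0∞)⁻¹) ^ n := by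
        simp [mul_pow, ENNReal.inv_pow]
    _ = b := by
        have hcompl : 1 - ((b - 1 : ℕ) : ℝ≥0∞) * (b : ℝ≥0∞)⁻¹ = (b : ℝ≥0∞)⁻¹ := by
          refine ENNReal.sub_eq_of_eq_add ?_ ?_
          · exact ENNReal.mul_ne_top (ENNReal.natCast_ne_top _) (ENNReal.inv_ne_top.2 hb)
          · rw [← ENNReal.mul_inv_cancel hb hb', ← one_add_mul]
            norm_cast
            rw [Nat.add_sub_cancel' (NeZero.one_le)]
        rw [ENNReal.tsum_geometric, hcompl, inv_inv]

lemma measureReal_kempnerMeasure_univ (b : ℕ) [NeZero b] : (kempnerMeasure b).real univ = b := by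
  rw [measureReal_def, kempnerMeasure_univ, ENNReal.toReal_natCast]

instance [NeZero b] : IsFiniteMeasure (kempnerMeasure b) :=
  ⟨by rw [kempnerMeasure_univ]; exact ENNReal.natCast_lt_top b⟩

lemma ae_mem_Icc_kempnerMeasure [NeZero b] : ∀ᵐ x ∂kempnerMeasure b, x ∈ Icc (0 : ℝ) 1 :=
  Measure.ae_sum_iff.2 fun w => Measure.ae_smul_measure
    ((ae_dirac_iff measurableSet_Icc).2 (wordFraction_mem_Icc w)) _

lemma inv_pow_length_ne_top [NeZero b] (w : List (Finset.Ico 1 b)) :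
    ((b : ℝ≥0∞) ^ w.length)⁻¹ ≠ ∞ :=
  ENNReal.inv_ne_top.2 (pow_ne_zero _ (NeZero.ne _))

lemma integral_kempnerMeasure [NeZero b] (h : ℝ → ℝ) :
    ∫ x, h x ∂kempnerMeasure b
      = ∑' w : List (Finset.Ico 1 b), ((b : ℝ) ^ w.length)⁻¹ * h (wordFraction w) := by
  rw [kempnerMeasure, integral_sum_dirac inv_pow_length_ne_top]
  simp

lemma summable_of_integrable_kempnerMeasure [NeZero b] {h : ℝ → ℝ}
    (hh : Integrable h (kempnerMeasure b)) :
    Summable fun w : List (Finset.Ico 1 b) =>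
      ((b : ℝ) ^ w.length)⁻¹ * h (wordFraction w) := by
  have hnorm := (integrable_sum_dirac_iff inv_pow_length_ne_top).1 hh
  exact .of_norm (by simpa using hnorm)

lemma irwinSum_zero_zero_eq_integral (hb : 1 < b) :
    irwinSum b 0 0 = ∫ x, 1 / x ∂kempnerMeasure b := by
  have := NeZero.of_gt hb
  rw [irwinSum_zero_zero_eq_tsum hb, integral_kempnerMeasure]
  refine tsum_congr fun w => ?_
  rw [wordFraction]
  field_simp

lemma integrable_of_continuousOn [NeZero b] {h : ℝ → ℝ} (hh : ContinuousOn h (Icc 0 1)) :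
    Integrable h (kempnerMeasure b) := by
  rw [← Measure.restrict_eq_self_of_ae_mem (ae_mem_Icc_kempnerMeasure (b := b))]
  exact hh.integrableOn_compact isCompact_Icc

lemma integral_eq_add_sum_integral [NeZero b] {h : ℝ → ℝ} (hh : Integrable h (kempnerMeasure b)) :
    ∫ x, h x ∂kempnerMeasure b
      = h 0 + (∑ a ∈ Finset.Ico 1 b, ∫ x, h ((a + x) / b) ∂kempnerMeasure b) / b := by
  rw [integral_kempnerMeasure, tsum_list (summable_of_integrable_kempnerMeasure hh)]
  congr 1
  · simp [wordFraction_nil]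
  · rw [← Finset.sum_coe_sort (Finset.Ico 1 b), Finset.sum_div]
    refine Finset.sum_congr rfl fun a _ => ?_
    rw [integral_kempnerMeasure, ← tsum_div_const]
    refine tsum_congr fun w => ?_
    rw [wordFraction_cons, List.length_cons, pow_succ, mul_inv, div_eq_mul_inv]
    ring

end Measure

section Average

variable {b : ℕ} {h : ℝ → ℝ}

/-- The averaging operator `(T h) x = b⁻¹ ∑_{a < b} h ((a + x) / b)`, the transfer operator of
`x ↦ b x mod 1`. It preserves Lebesgue integrals over `[0, 1]`. -/
noncomputable def average (b : ℕ) (h : ℝ → ℝ) (x : ℝ) : ℝ :=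
  (∑ a ∈ Finset.range b, h ((a + x) / b)) / b

lemma average_eq_add_sum_Ico [NeZero b] (h : ℝ → ℝ) (x : ℝ) :
    average b h x = (h (x / b) + ∑ a ∈ Finset.Ico 1 b, h ((a + x) / b)) / b := by
  rw [average, Finset.range_eq_Ico, Finset.sum_eq_sum_Ico_succ_bot (NeZero.pos b)]
  simp

lemma continuousOn_comp_add_div {a : ℕ} (hab : a < b) (hh : ContinuousOn h (Icc 0 1)) :
    ContinuousOn (fun x => h ((a + x) / b)) (Icc 0 1) :=
  hh.comp (by fun_prop) fun _ hx => add_div_mem_Icc hab hx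

lemma continuousOn_comp_div [NeZero b] (hh : ContinuousOn h (Icc 0 1)) :
    ContinuousOn (fun x => h (x / b)) (Icc 0 1) := by
  simpa using continuousOn_comp_add_div (NeZero.pos b) hh

lemma continuousOn_average (hh : ContinuousOn h (Icc 0 1)) :
    ContinuousOn (average b h) (Icc 0 1) :=
  (continuousOn_finsetSum _ fun _ ha =>
    continuousOn_comp_add_div (Finset.mem_range.1 ha) hh).div_const _

lemma lipschitzOnWith_average [NeZero b] {K : NNReal} (hh : LipschitzOnWith K h (Icc 0 1)) :
    LipschitzOnWith (K / b) (average b h) (Icc 0 1) := by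
  have hb : (0 : ℝ) < b := by exact_mod_cast NeZero.pos b
  refine .of_dist_le_mul fun x hx y hy => ?_
  simp only [Real.dist_eq, average, NNReal.coe_div, NNReal.coe_natCast]
  rw [← sub_div, ← Finset.sum_sub_distrib, abs_div, abs_of_pos hb, div_le_iff₀ hb]
  calc |∑ a ∈ Finset.range b, (h ((a + x) / b) - h ((a + y) / b))|
      ≤ ∑ a ∈ Finset.range b, |h ((a + x) / b) - h ((a + y) / b)| :=
        Finset.abs_sum_le_sum_abs _ _
    _ ≤ ∑ _a ∈ Finset.range b, K / b * |x - y| := by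
        refine Finset.sum_le_sum fun a ha => ?_
        have hab := Finset.mem_range.1 ha
        have hlip := hh.norm_sub_le (add_div_mem_Icc hab hx) (add_div_mem_Icc hab hy)
        rwa [← sub_div, add_sub_add_left_eq_sub, norm_div, Real.norm_natCast, mul_div_assoc',
          mul_div_right_comm] at hlip
    _ = K / b * |x - y| * b := by
        rw [Finset.sum_const, Finset.card_range, nsmul_eq_mul, mul_comm]

lemma integral_average [NeZero b] (hh : ContinuousOn h (Icc 0 1)) :
    ∫ x in (0 : ℝ)..1, average b h x = ∫ x in (0 : ℝ)..1, h x := by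
  have hb : (0 : ℝ) < b := by exact_mod_cast NeZero.pos b
  have integral_piece (a : ℕ) :
      ∫ x in (0 : ℝ)..1, h ((a + x) / b) = b * ∫ x in (a / b : ℝ)..((a + 1 : ℕ) / b : ℝ), h x := by
    simpa [add_div] using
      intervalIntegral.integral_comp_add_div (a := 0) (b := 1) h hb.ne' ((a : ℝ) / b)
  have integrable_piece (a : ℕ) (hab : a < b) :
      IntervalIntegrable h volume (a / b : ℝ) ((a + 1 : ℕ) / b : ℝ) := by
    have hab' : ((a + 1 : ℕ) : ℝ) ≤ b := by exact_mod_cast hab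
    refine (hh.mono (Icc_subset_Icc (by positivity) ((div_le_one hb).2 hab')))
      |>.intervalIntegrable_of_Icc ?_
    gcongr
    exact a.le_succ
  simp only [average]
  rw [intervalIntegral.integral_div, intervalIntegral.integral_finsetSum fun a ha =>
      (continuousOn_comp_add_div (Finset.mem_range.1 ha) hh).intervalIntegrable_of_Icc zero_le_one]
  simp only [integral_piece]
  rw [← Finset.mul_sum, intervalIntegral.sum_integral_adjacent_intervals integrable_piece,
    mul_div_cancel_left₀ _ hb.ne']
  simp [hb.ne']

lemma integral_average_kempnerMeasure [NeZero b] (hh : ContinuousOn h (Icc 0 1)) :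
    ∫ x, average b h x ∂kempnerMeasure b
      = (∫ x, h x ∂kempnerMeasure b) - h 0 + (∫ x, h (x / b) ∂kempnerMeasure b) / b := by
  have hint (a : ℕ) (ha : a ∈ Finset.Ico 1 b) :
      Integrable (fun x => h ((a + x) / b)) (kempnerMeasure b) :=
    integrable_of_continuousOn (continuousOn_comp_add_div (Finset.mem_Ico.1 ha).2 hh)
  have hint_zero : Integrable (fun x => h (x / b)) (kempnerMeasure b) :=
    integrable_of_continuousOn (continuousOn_comp_div hh)
  simp only [average_eq_add_sum_Ico]
  rw [integral_div, integral_add hint_zero (integrable_finsetSum _ hint),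
    integral_finsetSum _ hint, integral_eq_add_sum_integral (integrable_of_continuousOn hh)]
  ring

end Average

section Discrepancy

variable {b : ℕ} {h k : ℝ → ℝ}

/-- The error made by replacing `kempnerMeasure b` by the uniform distribution of the same total
mass `b` on `[0, 1]`. -/
noncomputable def discrepancy (b : ℕ) (h : ℝ → ℝ) : ℝ :=
  (∫ x, h x ∂kempnerMeasure b) - b * ∫ x in (0 : ℝ)..1, h x

lemma discrepancy_add [NeZero b] (hh : ContinuousOn h (Icc 0 1)) (hk : ContinuousOn k (Icc 0 1)) :
    discrepancy b (fun x => h x + k x) = discrepancy b h + discrepancy b k := by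
  rw [discrepancy, integral_add (integrable_of_continuousOn hh) (integrable_of_continuousOn hk),
    intervalIntegral.integral_add (hh.intervalIntegrable_of_Icc zero_le_one)
      (hk.intervalIntegrable_of_Icc zero_le_one), discrepancy, discrepancy]
  ring

lemma discrepancy_const_mul (b : ℕ) (c : ℝ) (h : ℝ → ℝ) :
    discrepancy b (fun x => c * h x) = c * discrepancy b h := by
  rw [discrepancy, integral_const_mul, intervalIntegral.integral_const_mul, discrepancy]
  ring

lemma discrepancy_const (b : ℕ) [NeZero b] (c : ℝ) : discrepancy b (fun _ => c) = 0 := by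
  simp [discrepancy, measureReal_kempnerMeasure_univ]

lemma abs_integral_kempnerMeasure_le [NeZero b] {C : ℝ} (hC : ∀ x ∈ Icc (0 : ℝ) 1, |h x| ≤ C) :
    |∫ x, h x ∂kempnerMeasure b| ≤ C * b := by
  rw [← measureReal_kempnerMeasure_univ]
  exact norm_integral_le_of_norm_le_const (f := h) (ae_mem_Icc_kempnerMeasure.mono hC)

lemma abs_discrepancy_le [NeZero b] {C : ℝ} (hC : ∀ x ∈ Icc (0 : ℝ) 1, |h x| ≤ C) :
    |discrepancy b h| ≤ 2 * b * C := by
  have hleb : |∫ x in (0 : ℝ)..1, h x| ≤ C := by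
    rw [← uIcc_of_le zero_le_one] at hC
    simpa using intervalIntegral.norm_integral_le_of_norm_le_const (f := h) fun x hx =>
      hC x (uIoc_subset_uIcc hx)
  calc |discrepancy b h|
      ≤ |∫ x, h x ∂kempnerMeasure b| + |b * ∫ x in (0 : ℝ)..1, h x| := abs_sub _ _
    _ ≤ C * b + b * C := by
        rw [abs_mul, Nat.abs_cast]
        gcongr
        exact abs_integral_kempnerMeasure_le hC
    _ = 2 * b * C := by ring

lemma discrepancy_eq_discrepancy_average_sub [NeZero b] (hh : ContinuousOn h (Icc 0 1)) :
    discrepancy b h = discrepancy b (average b h)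
      - (∫ x, (h (x / b) - h 0) ∂kempnerMeasure b) / b := by
  have hb : (b : ℝ) ≠ 0 := NeZero.ne _
  rw [discrepancy, discrepancy, integral_average hh, integral_average_kempnerMeasure hh,
    integral_sub (integrable_of_continuousOn (continuousOn_comp_div hh)) (integrable_const _),
    integral_const, measureReal_kempnerMeasure_univ, smul_eq_mul]
  field_simp
  ring

lemma abs_discrepancy_le_abs_discrepancy_average_add [NeZero b] (hh : ContinuousOn h (Icc 0 1))
    {δ : ℝ} (hδ : ∀ x ∈ Icc (0 : ℝ) 1, |h (x / b) - h 0| ≤ δ) :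
    |discrepancy b h| ≤ |discrepancy b (average b h)| + δ := by
  have hb : (0 : ℝ) < b := by exact_mod_cast NeZero.pos b
  rw [discrepancy_eq_discrepancy_average_sub hh]
  refine (abs_sub _ _).trans (add_le_add_right ?_ _)
  rw [abs_div, Nat.abs_cast, div_le_iff₀ hb]
  exact abs_integral_kempnerMeasure_le hδ

lemma abs_discrepancy_le_of_lipschitzOnWith [NeZero b] {K : NNReal}
    (hh : LipschitzOnWith K h (Icc 0 1)) : |discrepancy b h| ≤ 2 * b * K := by
  have hsub : discrepancy b h = discrepancy b fun x => h x + -h 0 := by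
    rw [discrepancy_add hh.continuousOn continuousOn_const, discrepancy_const, add_zero]
  rw [hsub]
  refine abs_discrepancy_le fun x hx => ?_
  calc |h x + -h 0| ≤ K * |x - 0| := hh.norm_sub_le hx (left_mem_Icc.2 zero_le_one)
    _ ≤ K * 1 := by
        gcongr
        rw [sub_zero, abs_of_nonneg hx.1]
        exact hx.2
    _ = K := mul_one _

lemma abs_discrepancy_le_average_of_lipschitzOnWith [NeZero b] {K : NNReal}
    (hh : LipschitzOnWith K h (Icc 0 1)) :
    |discrepancy b h| ≤ |discrepancy b (average b h)| + K / b := by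
  refine abs_discrepancy_le_abs_discrepancy_average_add hh.continuousOn fun x hx => ?_
  have hxb : x / b ∈ Icc (0 : ℝ) 1 := by simpa using add_div_mem_Icc (NeZero.pos b) hx
  calc |h (x / b) - h 0| ≤ K * |x / b - 0| := hh.norm_sub_le hxb (left_mem_Icc.2 zero_le_one)
    _ = K * x / b := by rw [sub_zero, abs_of_nonneg hxb.1, mul_div_assoc]
    _ ≤ K / b := by
        gcongr
        exact mul_le_of_le_one_right K.coe_nonneg hx.2

-- Each averaging divides the Lipschitz constant by `b`, so two of them beat the mass `b`.
lemma abs_discrepancy_le_div_of_lipschitzOnWith [NeZero b] {K : NNReal}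
    (hh : LipschitzOnWith K h (Icc 0 1)) : |discrepancy b h| ≤ 4 * K / b := by
  have hb : (1 : ℝ) ≤ b := Nat.one_le_cast.2 NeZero.one_le
  have hh₁ := lipschitzOnWith_average (b := b) hh
  have hh₂ := lipschitzOnWith_average (b := b) hh₁
  have bound₁ := abs_discrepancy_le_average_of_lipschitzOnWith (b := b) hh
  have bound₂ := abs_discrepancy_le_average_of_lipschitzOnWith (b := b) hh₁
  have bound₃ := abs_discrepancy_le_of_lipschitzOnWith (b := b) hh₂
  push_cast at bound₂ bound₃
  have hKb : (K : ℝ) / b / b ≤ K / b := div_le_self (by positivity) hb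
  have hcancel : 2 * b * ((K : ℝ) / b / b) = 2 * K / b := by field_simp
  calc |discrepancy b h| ≤ 2 * b * (K / b / b) + K / b / b + K / b := by linarith
    _ ≤ 2 * K / b + K / b + K / b := by rw [hcancel]; gcongr
    _ = 4 * K / b := by ring

end Discrepancy

section Moments

lemma sum_range_cast (n : ℕ) : ∑ a ∈ Finset.range n, (a : ℝ) = n * (n - 1) / 2 := by
  induction n with
  | zero => simp
  | succ n ih =>
    rw [Finset.sum_range_succ, ih]
    push_cast
    ring

lemma sum_range_cast_sq (n : ℕ) :
    ∑ a ∈ Finset.range n, (a : ℝ) ^ 2 = n * (n - 1) * (2 * n - 1) / 6 := by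
  induction n with
  | zero => simp
  | succ n ih =>
    rw [Finset.sum_range_succ, ih]
    push_cast
    ring

variable (b : ℕ) [NeZero b]

lemma average_id : average b (fun x => x) = fun x => (b : ℝ)⁻¹ * x + (b - 1) / (2 * b) := by
  have hb : (b : ℝ) ≠ 0 := NeZero.ne _
  ext x
  simp only [average, ← Finset.sum_div, Finset.sum_add_distrib, sum_range_cast, Finset.sum_const,
    Finset.card_range, nsmul_eq_mul]
  field_simp
  ring

lemma average_sq : average b (fun x => x ^ 2) = fun x =>
    ((b : ℝ) ^ 2)⁻¹ * x ^ 2 + ((b - 1) / b ^ 2 * x + (b - 1) * (2 * b - 1) / (6 * b ^ 2)) := by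
  have hb : (b : ℝ) ≠ 0 := NeZero.ne _
  ext x
  simp only [average, div_pow, add_sq, ← Finset.sum_div, Finset.sum_add_distrib, ← Finset.mul_sum,
    ← Finset.sum_mul, sum_range_cast, sum_range_cast_sq, Finset.sum_const, Finset.card_range,
    nsmul_eq_mul]
  field_simp
  ring

lemma discrepancy_id :
    discrepancy b (fun x => x) = -b / (2 * ((b : ℝ) ^ 2 - b + 1)) := by
  have hb : (b : ℝ) ≠ 0 := NeZero.ne _
  have hd : (b : ℝ) ^ 2 - b + 1 ≠ 0 := by nlinarith [sq_nonneg ((b : ℝ) - 1)]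
  have hmean : ∫ x, x ∂kempnerMeasure b = discrepancy b (fun x => x) + b / 2 := by
    rw [discrepancy, integral_id]
    ring
  have haverage : discrepancy b (average b fun x => x)
      = (b : ℝ)⁻¹ * discrepancy b fun x => x := by
    rw [average_id, discrepancy_add (by fun_prop) (by fun_prop), discrepancy_const_mul,
      discrepancy_const, add_zero]
  have hstep := discrepancy_eq_discrepancy_average_sub (b := b) (h := fun x => x) continuousOn_id
  simp only [sub_zero, integral_div] at hstep
  rw [haverage, hmean] at hstep
  rw [eq_div_iff (by simpa using hd)]
  field_simp at hstep
  linear_combination hstep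

lemma discrepancy_sq_mul : discrepancy b (fun x => x ^ 2) * ((b : ℝ) ^ 3 - b + 1)
    = b * (b - 1) * discrepancy b (fun x => x) - b / 3 := by
  have hb : (b : ℝ) ≠ 0 := NeZero.ne _
  have hmean : ∫ x, x ^ 2 ∂kempnerMeasure b = discrepancy b (fun x => x ^ 2) + b / 3 := by
    rw [discrepancy, integral_pow]
    ring
  have haverage : discrepancy b (average b fun x => x ^ 2)
      = ((b : ℝ) ^ 2)⁻¹ * discrepancy b (fun x => x ^ 2)
        + (b - 1) / b ^ 2 * discrepancy b fun x => x := by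
    rw [average_sq, discrepancy_add (by fun_prop) (by fun_prop),
      discrepancy_add (by fun_prop) (by fun_prop), discrepancy_const_mul, discrepancy_const_mul,
      discrepancy_const, add_zero]
  have hstep := discrepancy_eq_discrepancy_average_sub (b := b) (continuousOn_pow (M := ℝ) 2)
  simp only [div_pow, zero_pow two_ne_zero, sub_zero, integral_div] at hstep
  rw [haverage, hmean] at hstep
  field_simp at hstep
  linear_combination hstep / 3

lemma abs_discrepancy_sq_add_le :
    |discrepancy b (fun x => x ^ 2) + 5 / (6 * (b : ℝ) ^ 2)| ≤ 2 / (b : ℝ) ^ 4 := by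
  have hb : (1 : ℝ) ≤ b := Nat.one_le_cast.2 NeZero.one_le
  have hd : (b : ℝ) ^ 2 / 2 ≤ (b : ℝ) ^ 2 - b + 1 := by nlinarith [sq_nonneg ((b : ℝ) - 1)]
  have hD : (b : ℝ) ^ 3 / 2 ≤ (b : ℝ) ^ 3 - b + 1 := by nlinarith [sq_nonneg ((b : ℝ) - 1)]
  have hD_pos : 0 < (b : ℝ) ^ 3 - b + 1 := hD.trans_lt' (by positivity)
  have hd_pos : 0 < (b : ℝ) ^ 2 - b + 1 := hd.trans_lt' (by positivity)
  have hprod : (discrepancy b (fun x => x ^ 2) + 5 / (6 * (b : ℝ) ^ 2)) * ((b : ℝ) ^ 3 - b + 1)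
      = b / (2 * ((b : ℝ) ^ 2 - b + 1)) - 5 * (b - 1) / (6 * (b : ℝ) ^ 2) := by
    rw [add_mul, discrepancy_sq_mul, discrepancy_id]
    have hd_ne : (b : ℝ) * (b - 1) + 1 ≠ 0 := ne_of_gt (by linarith)
    field_simp
    ring
  have hleft : b / (2 * ((b : ℝ) ^ 2 - b + 1)) ≤ 1 / b := by
    rw [div_le_div_iff₀ (by positivity) (by positivity)]
    nlinarith
  have hright : 5 * ((b : ℝ) - 1) / (6 * (b : ℝ) ^ 2) ≤ 1 / b := by
    rw [div_le_div_iff₀ (by positivity) (by positivity)]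
    nlinarith
  have hprod_le : |discrepancy b (fun x => x ^ 2) + 5 / (6 * (b : ℝ) ^ 2)| * |(b : ℝ) ^ 3 - b + 1|
      ≤ 1 / (b : ℝ) := by
    rw [← abs_mul, hprod]
    exact abs_sub_le_of_nonneg_of_le (by positivity) hleft
      (div_nonneg (by linarith) (by positivity)) hright
  rw [abs_of_pos hD_pos] at hprod_le
  calc |discrepancy b (fun x => x ^ 2) + 5 / (6 * (b : ℝ) ^ 2)|
      ≤ 1 / b / ((b : ℝ) ^ 3 - b + 1) := (le_div_iff₀ hD_pos).2 hprod_le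
    _ ≤ 1 / b / ((b : ℝ) ^ 3 / 2) := by gcongr
    _ = 2 / (b : ℝ) ^ 4 := by field_simp

end Moments

section Digamma

lemma hasSum_zetaR {s : ℕ} (hs : 1 < s) :
    HasSum (fun n : ℕ => 1 / ((n : ℝ) + 1) ^ s) (zetaR s) := by
  have hsum := (summable_nat_add_iff 1).2 (Real.summable_one_div_nat_pow.2 hs)
  push_cast at hsum
  exact hsum.hasSum

lemma zetaR_nonneg (s : ℕ) : 0 ≤ zetaR s := tsum_nonneg fun _ => by positivity

/-- The general term of the series `ψ (1 + y) = -γ + ∑ n, (1 / (n + 1) - 1 / (n + 1 + y))`. -/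
noncomputable def digammaTerm (n : ℕ) (y : ℝ) : ℝ := 1 / (n + 1) - 1 / (n + 1 + y)

/-- The shifted digamma function `y ↦ ψ (1 + y)` for `0 ≤ y`, defined by its series. -/
noncomputable def digammaOneAdd (y : ℝ) : ℝ :=
  ∑' n, digammaTerm n y - Real.eulerMascheroniConstant

lemma digammaTerm_zero (n : ℕ) : digammaTerm n 0 = 0 := by simp [digammaTerm]

lemma abs_digammaTerm_sub_le (n : ℕ) {y z : ℝ} (hy : 0 ≤ y) (hz : 0 ≤ z) :
    |digammaTerm n y - digammaTerm n z| ≤ 1 / ((n : ℝ) + 1) ^ 2 * |y - z| := by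
  have hsub : digammaTerm n y - digammaTerm n z = (y - z) / ((n + 1 + z) * (n + 1 + y)) := by
    simp only [digammaTerm]
    field_simp
    ring
  have hpos : 0 < ((n : ℝ) + 1 + z) * (n + 1 + y) := by positivity
  rw [hsub, abs_div, abs_of_pos hpos, one_div_mul_eq_div, pow_two]
  gcongr _ / (?_ * ?_) <;> linarith

lemma abs_digammaTerm_le (n : ℕ) {y : ℝ} (hy : 0 ≤ y) :
    |digammaTerm n y| ≤ 1 / ((n : ℝ) + 1) ^ 2 * y := by
  simpa [digammaTerm_zero, abs_of_nonneg hy] using abs_digammaTerm_sub_le n hy le_rfl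

lemma summable_digammaTerm {y : ℝ} (hy : 0 ≤ y) : Summable fun n => digammaTerm n y :=
  .of_norm_bounded ((hasSum_zetaR one_lt_two).summable.mul_right y)
    fun n => abs_digammaTerm_le n hy

lemma digammaOneAdd_zero : digammaOneAdd 0 = -Real.eulerMascheroniConstant := by
  simp [digammaOneAdd, digammaTerm_zero]

lemma lipschitzOnWith_digammaOneAdd :
    LipschitzOnWith (zetaR 2).toNNReal digammaOneAdd (Ici 0) := by
  refine .of_dist_le' fun y hy z hz => ?_
  rw [Real.dist_eq, digammaOneAdd, digammaOneAdd, sub_sub_sub_cancel_right,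
    ← (summable_digammaTerm hy).tsum_sub (summable_digammaTerm hz), ← Real.norm_eq_abs]
  refine tsum_of_norm_bounded ((hasSum_zetaR one_lt_two).mul_right _) fun n => ?_
  exact abs_digammaTerm_sub_le n hy hz

lemma continuousOn_digammaOneAdd : ContinuousOn digammaOneAdd (Icc 0 1) :=
  lipschitzOnWith_digammaOneAdd.continuousOn.mono Icc_subset_Ici_self

/-- The sequence `log N - ∑_{0 < n < N} 1 / (n + y)`, which converges to `ψ (1 + y)`. -/
noncomputable def digammaSeq (y : ℝ) (N : ℕ) : ℝ := Real.log N - ∑ n ∈ Finset.Ico 1 N, 1 / (n + y)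

lemma tendsto_digammaSeq {y : ℝ} (hy : 0 ≤ y) :
    Tendsto (digammaSeq y) atTop (𝓝 (digammaOneAdd y)) := by
  rw [← Filter.tendsto_add_atTop_iff_nat 1]
  refine ((summable_digammaTerm hy).hasSum.tendsto_sum_nat.sub
    Real.tendsto_eulerMascheroniSeq).congr fun N => ?_
  simp only [digammaSeq, Finset.sum_Ico_eq_sum_range, digammaTerm, Finset.sum_sub_distrib,
    Real.eulerMascheroniSeq, harmonic, Nat.add_sub_cancel]
  push_cast
  simp only [one_div, add_comm (1 : ℝ)]
  ring

lemma sum_range_sum_Ico_mul_add (b : ℕ) (f : ℕ → ℝ) {N : ℕ} (hN : 1 ≤ N) :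
    ∑ a ∈ Finset.range b, ∑ n ∈ Finset.Ico 1 N, f (b * n + a)
      = ∑ m ∈ Finset.Ico b (b * N), f m := by
  induction N, hN using Nat.le_induction with
  | base => simp
  | succ N hN ih =>
    have hblock : ∑ a ∈ Finset.range b, f (b * N + a)
        = ∑ m ∈ Finset.Ico (b * N) (b * (N + 1)), f m := by
      rw [Finset.sum_Ico_eq_sum_range, mul_add_one, Nat.add_sub_cancel_left]
    simp only [Finset.sum_Ico_succ_top hN, Finset.sum_add_distrib]
    rw [ih, hblock, Finset.sum_Ico_consecutive _ (Nat.le_mul_of_pos_right b hN)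
      (Nat.mul_le_mul_left b N.le_succ)]

lemma digammaSeq_mul_sub_average {b N : ℕ} [NeZero b] (hN : 1 ≤ N) (x : ℝ) :
    digammaSeq x (b * N) - average b (fun y => digammaSeq y N) x
      = Real.log b - ∑ a ∈ Finset.Ico 1 b, 1 / (a + x) := by
  have hb : (b : ℝ) ≠ 0 := NeZero.ne _
  have hN' : (N : ℝ) ≠ 0 := Nat.cast_ne_zero.2 (Nat.one_le_iff_ne_zero.1 hN)
  have hterm (n a : ℕ) : 1 / (n + (a + x) / b) = b * (1 / (((b * n + a : ℕ) : ℝ) + x)) := by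
    have hden : (n + (a + x) / b : ℝ) = (((b * n + a : ℕ) : ℝ) + x) / b := by
      push_cast
      field_simp
      ring
    rw [hden, one_div_div, mul_one_div]
  simp only [average, digammaSeq, hterm, ← Finset.mul_sum, Finset.sum_sub_distrib,
    Finset.sum_const, Finset.card_range, nsmul_eq_mul]
  rw [sum_range_sum_Ico_mul_add b (fun m => 1 / ((m : ℝ) + x)) hN,
    ← Finset.sum_Ico_consecutive _ NeZero.one_le (Nat.le_mul_of_pos_right b hN), Nat.cast_mul,
    Real.log_mul hb hN']
  field_simp
  ring

-- Gauss's multiplication formula for the digamma function.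
lemma digammaOneAdd_sub_average {b : ℕ} [NeZero b] {x : ℝ} (hx : 0 ≤ x) :
    digammaOneAdd x - average b digammaOneAdd x
      = Real.log b - ∑ a ∈ Finset.Ico 1 b, 1 / (a + x) := by
  have hmul : Tendsto (fun N => digammaSeq x (b * N)) atTop (𝓝 (digammaOneAdd x)) :=
    (tendsto_digammaSeq hx).comp (tendsto_id.const_mul_atTop' (NeZero.pos b))
  have haverage : Tendsto (fun N => average b (fun y => digammaSeq y N) x) atTop
      (𝓝 (average b digammaOneAdd x)) :=
    (tendsto_finsetSum _ fun a _ => tendsto_digammaSeq (by positivity)).div_const _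
  refine tendsto_nhds_unique (hmul.sub haverage) (tendsto_const_nhds.congr' ?_)
  filter_upwards [eventually_ge_atTop 1] with N hN
  exact (digammaSeq_mul_sub_average hN x).symm

lemma integral_digammaTerm (n : ℕ) {y : ℝ} (hy : 0 ≤ y) :
    ∫ t in (0 : ℝ)..y, digammaTerm n t
      = y * (1 / (n + 1)) - (Real.log (n + 1 + y) - Real.log (n + 1)) := by
  have hn : (0 : ℝ) < n + 1 := n.cast_add_one_pos
  have hinv : ∫ t in (0 : ℝ)..y, 1 / ((n : ℝ) + 1 + t)
      = Real.log (n + 1 + y) - Real.log (n + 1) := by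
    rw [intervalIntegral.integral_comp_add_left (fun t => 1 / t), add_zero,
      integral_one_div_of_pos hn (by positivity), Real.log_div (by positivity) hn.ne']
  have hint : IntervalIntegrable (fun t => 1 / ((n : ℝ) + 1 + t)) volume 0 y := by
    refine ContinuousOn.intervalIntegrable_of_Icc hy (continuousOn_const.div (by fun_prop) ?_)
    intro t ht
    have := ht.1
    positivity
  simp only [digammaTerm]
  rw [intervalIntegral.integral_sub intervalIntegrable_const hint, hinv,
    intervalIntegral.integral_const, smul_eq_mul, sub_zero]

lemma hasSum_integral_digammaTerm {y : ℝ} (hy : 0 ≤ y) :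
    HasSum (fun n => ∫ t in (0 : ℝ)..y, digammaTerm n t)
      (∫ t in (0 : ℝ)..y, ∑' n, digammaTerm n t) := by
  have hnonneg {t : ℝ} (ht : t ∈ uIoc 0 y) : 0 ≤ t := by
    rw [uIoc_of_le hy] at ht
    exact ht.1.le
  have hle {t : ℝ} (ht : t ∈ uIoc 0 y) : t ≤ y := by
    rw [uIoc_of_le hy] at ht
    exact ht.2
  have hsum : Summable fun n : ℕ => 1 / ((n : ℝ) + 1) ^ 2 * y :=
    (hasSum_zetaR one_lt_two).summable.mul_right y
  refine intervalIntegral.hasSum_integral_of_dominated_convergence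
    (fun n _ => 1 / ((n : ℝ) + 1) ^ 2 * y) (fun n => ?_) (fun n => ?_) ?_ ?_ ?_
  · have hmeas : Measurable (digammaTerm n) := by
      unfold digammaTerm
      fun_prop
    exact hmeas.aestronglyMeasurable
  · refine ae_of_all _ fun t ht => (abs_digammaTerm_le n (hnonneg ht)).trans ?_
    gcongr
    exact hle ht
  · exact ae_of_all _ fun _ _ => hsum
  · exact intervalIntegrable_const
  · exact ae_of_all _ fun t ht => (summable_digammaTerm (hnonneg ht)).hasSum

lemma sum_integral_digammaTerm (N : ℕ) {y : ℝ} (hy : 0 ≤ y) :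
    ∑ n ∈ Finset.range N, ∫ t in (0 : ℝ)..y, digammaTerm n t
      = Real.BohrMollerup.logGammaSeq (1 + y) N + y * (harmonic N - Real.log N)
        + (Real.log (N + (1 + y)) - Real.log N) := by
  have hfactorial : Real.log N.factorial = ∑ n ∈ Finset.range N, Real.log ((n : ℝ) + 1) := by
    rw [← Finset.prod_range_add_one_eq_factorial, Nat.cast_prod,
      Real.log_prod fun n _ => Nat.cast_ne_zero.2 n.succ_ne_zero]
    simp
  simp only [integral_digammaTerm _ hy, Finset.sum_sub_distrib, ← Finset.mul_sum,
    Real.BohrMollerup.logGammaSeq, Finset.sum_range_succ _ N, hfactorial, harmonic]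
  push_cast
  simp only [one_div, add_comm (1 + y), add_assoc]
  ring

lemma integral_digammaOneAdd {y : ℝ} (hy : 0 ≤ y) :
    ∫ t in (0 : ℝ)..y, digammaOneAdd t = Real.log (Real.Gamma (1 + y)) := by
  have hlog : Tendsto (fun N : ℕ => Real.log (N + (1 + y)) - Real.log N) atTop (𝓝 0) :=
    (Real.tendsto_log_comp_add_sub_log (1 + y)).comp tendsto_natCast_atTop_atTop
  have hlim := ((Real.BohrMollerup.tendsto_log_gamma (by positivity : 0 < 1 + y)).add
    (Real.tendsto_harmonic_sub_log.const_mul y)).add hlog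
  have hseries : ∫ t in (0 : ℝ)..y, ∑' n, digammaTerm n t
      = Real.log (Real.Gamma (1 + y)) + y * Real.eulerMascheroniConstant + 0 :=
    tendsto_nhds_unique (hasSum_integral_digammaTerm hy).tendsto_sum_nat
      (hlim.congr fun N => (sum_integral_digammaTerm N hy).symm)
  have hint : IntervalIntegrable (fun t => ∑' n, digammaTerm n t) volume 0 y := by
    have hcont : ContinuousOn (fun t => digammaOneAdd t + Real.eulerMascheroniConstant) (Icc 0 y) :=
      (lipschitzOnWith_digammaOneAdd.continuousOn.mono Icc_subset_Ici_self).add continuousOn_const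
    simpa only [digammaOneAdd, sub_add_cancel] using hcont.intervalIntegrable_of_Icc hy
  simp only [digammaOneAdd]
  rw [intervalIntegral.integral_sub hint intervalIntegrable_const, hseries,
    intervalIntegral.integral_const, smul_eq_mul]
  ring

/-- The error of the quadratic Taylor polynomial of `ψ (1 + y)` at `y = 0`. -/
noncomputable def digammaRemainder (y : ℝ) : ℝ :=
  digammaOneAdd y - (-Real.eulerMascheroniConstant + zetaR 2 * y - zetaR 3 * y ^ 2)

lemma hasSum_digammaRemainder {y : ℝ} (hy : 0 ≤ y) :
    HasSum (fun n : ℕ => y ^ 2 * digammaTerm n y / ((n : ℝ) + 1) ^ 2) (digammaRemainder y) := by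
  have hterm (n : ℕ) : y ^ 2 * digammaTerm n y / ((n : ℝ) + 1) ^ 2
      = digammaTerm n y - 1 / ((n : ℝ) + 1) ^ 2 * y + 1 / ((n : ℝ) + 1) ^ 3 * y ^ 2 := by
    have hden : (n : ℝ) + 1 + y ≠ 0 := by positivity
    simp only [digammaTerm]
    field_simp
    ring
  have hvalue : digammaRemainder y
      = ∑' n, digammaTerm n y - zetaR 2 * y + zetaR 3 * y ^ 2 := by
    rw [digammaRemainder, digammaOneAdd]
    ring
  simp only [hterm, hvalue]
  exact ((summable_digammaTerm hy).hasSum.sub ((hasSum_zetaR one_lt_two).mul_right y)).add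
    ((hasSum_zetaR (by norm_num)).mul_right (y ^ 2))

lemma abs_sq_mul_digammaTerm_sub_le (n : ℕ) {c y z : ℝ} (hy : y ∈ Icc 0 c) (hz : z ∈ Icc 0 c) :
    |y ^ 2 * digammaTerm n y - z ^ 2 * digammaTerm n z|
      ≤ 3 * c ^ 2 * |y - z| * (1 / ((n : ℝ) + 1) ^ 2) := by
  have hc : 0 ≤ c := hy.1.trans hy.2
  have hadd : |y + z| ≤ 2 * c := by
    rw [abs_of_nonneg (add_nonneg hy.1 hz.1)]
    linarith [hy.2, hz.2]
  have hzc : |digammaTerm n z| ≤ 1 / ((n : ℝ) + 1) ^ 2 * c :=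
    (abs_digammaTerm_le n hz.1).trans (by gcongr; exact hz.2)
  calc |y ^ 2 * digammaTerm n y - z ^ 2 * digammaTerm n z|
      = |y ^ 2 * (digammaTerm n y - digammaTerm n z) + (y + z) * (y - z) * digammaTerm n z| := by
        ring_nf
    _ ≤ y ^ 2 * |digammaTerm n y - digammaTerm n z|
          + |y + z| * |y - z| * |digammaTerm n z| := by
        refine (abs_add_le _ _).trans_eq ?_
        rw [abs_mul, abs_mul, abs_mul, abs_of_nonneg (sq_nonneg y)]
    _ ≤ c ^ 2 * (1 / ((n : ℝ) + 1) ^ 2 * |y - z|)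
          + 2 * c * |y - z| * (1 / ((n : ℝ) + 1) ^ 2 * c) := by
        gcongr
        exacts [hy.1, hy.2, abs_digammaTerm_sub_le n hy.1 hz.1]
    _ = 3 * c ^ 2 * |y - z| * (1 / ((n : ℝ) + 1) ^ 2) := by ring

lemma abs_digammaRemainder_sub_le {c y z : ℝ} (hy : y ∈ Icc 0 c) (hz : z ∈ Icc 0 c) :
    |digammaRemainder y - digammaRemainder z| ≤ 3 * c ^ 2 * |y - z| * zetaR 4 := by
  have hsum := (hasSum_digammaRemainder hy.1).sub (hasSum_digammaRemainder hz.1)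
  rw [← hsum.tsum_eq, ← Real.norm_eq_abs]
  refine tsum_of_norm_bounded
    ((hasSum_zetaR (by norm_num)).mul_left (3 * c ^ 2 * |y - z|)) fun n => ?_
  rw [← sub_div, norm_div, Real.norm_eq_abs, norm_pow, Real.norm_of_nonneg (by positivity)]
  refine (div_le_div_of_nonneg_right (abs_sq_mul_digammaTerm_sub_le n hy hz)
    (by positivity)).trans_eq ?_
  field_simp

end Digamma

section Asymptotics

variable {b : ℕ}

lemma lipschitzOnWith_digammaRemainder_div :
    LipschitzOnWith (3 * zetaR 4 / (b : ℝ) ^ 3).toNNReal (fun x => digammaRemainder (x / b))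
      (Icc 0 1) := by
  have hscale {x : ℝ} (hx : x ∈ Icc (0 : ℝ) 1) : x / b ∈ Icc (0 : ℝ) (1 / b) :=
    ⟨by have := hx.1; positivity, by gcongr; exact hx.2⟩
  refine .of_dist_le' fun x hx y hy => ?_
  rw [Real.dist_eq, Real.dist_eq]
  refine (abs_digammaRemainder_sub_le (hscale hx) (hscale hy)).trans_eq ?_
  rw [← sub_div, abs_div, Nat.abs_cast]
  field_simp

lemma abs_one_div_wordFraction_le [NeZero b] (w : List (Finset.Ico 1 b)) :
    |1 / wordFraction w| ≤ b := by
  cases w with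
  | nil => simp [wordFraction_nil]
  | cons a w =>
    have hb : (0 : ℝ) < b := by exact_mod_cast NeZero.pos b
    have ha : (1 : ℝ) ≤ (a : ℕ) := by exact_mod_cast (Finset.mem_Ico.1 a.2).1
    have hden : 1 ≤ (a : ℕ) + wordFraction w := by linarith [(wordFraction_mem_Icc w).1]
    rw [wordFraction_cons, one_div_div, abs_of_nonneg (by positivity)]
    exact div_le_self hb.le hden

lemma integrable_one_div_kempnerMeasure [NeZero b] :
    Integrable (fun x => 1 / x) (kempnerMeasure b) := by
  refine .of_bound (by fun_prop) (b : ℝ) (Measure.ae_sum_iff.2 fun w => ?_)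
  refine Measure.ae_smul_measure ?_ _
  rw [ae_dirac_eq]
  exact abs_one_div_wordFraction_le w

lemma irwinSum_zero_zero_eq_integral_sum (hb : 1 < b) : irwinSum b 0 0
    = ∫ x, ∑ a ∈ Finset.Ico 1 b, 1 / (a + x) ∂kempnerMeasure b := by
  have := NeZero.of_gt hb
  have hb0 : (b : ℝ) ≠ 0 := NeZero.ne _
  have hint (a : ℕ) (ha : a ∈ Finset.Ico 1 b) :
      Integrable (fun x : ℝ => 1 / (a + x)) (kempnerMeasure b) := by
    refine integrable_of_continuousOn (continuousOn_const.div (by fun_prop) fun x hx => ?_)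
    have ha' : (0 : ℝ) < a := by exact_mod_cast (Finset.mem_Ico.1 ha).1
    linarith [hx.1]
  rw [irwinSum_zero_zero_eq_integral hb,
    integral_eq_add_sum_integral integrable_one_div_kempnerMeasure, integral_finsetSum _ hint,
    div_zero, zero_add]
  simp only [one_div_div, div_eq_mul_one_div (b : ℝ), integral_const_mul, ← Finset.mul_sum]
  field_simp

lemma irwinSum_zero_zero_eq_add_discrepancy (hb : 1 < b) : irwinSum b 0 0
    = b * Real.log b + b * Real.log (Real.Gamma (1 + 1 / b)) + Real.eulerMascheroniConstant
      + discrepancy b (fun x => digammaOneAdd (x / b)) / b := by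
  have := NeZero.of_gt hb
  have hb0 : (b : ℝ) ≠ 0 := NeZero.ne _
  have hint : Integrable digammaOneAdd (kempnerMeasure b) :=
    integrable_of_continuousOn continuousOn_digammaOneAdd
  have hint_sub : Integrable (fun x => Real.log b - digammaOneAdd x) (kempnerMeasure b) :=
    (integrable_const _).sub hint
  have hint_average : Integrable (average b digammaOneAdd) (kempnerMeasure b) :=
    integrable_of_continuousOn (continuousOn_average continuousOn_digammaOneAdd)
  have hgamma : ∫ x in (0 : ℝ)..1, digammaOneAdd (x / b)
      = b * Real.log (Real.Gamma (1 + 1 / b)) := by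
    rw [intervalIntegral.integral_comp_div _ hb0, zero_div, integral_digammaOneAdd (by positivity),
      smul_eq_mul]
  have hgauss : ∫ x, ∑ a ∈ Finset.Ico 1 b, 1 / (a + x) ∂kempnerMeasure b
      = ∫ x, (Real.log b - digammaOneAdd x + average b digammaOneAdd x) ∂kempnerMeasure b := by
    refine integral_congr_ae (ae_mem_Icc_kempnerMeasure.mono fun x hx => ?_)
    linear_combination digammaOneAdd_sub_average (b := b) hx.1
  rw [irwinSum_zero_zero_eq_integral_sum hb, hgauss,
    integral_add hint_sub hint_average, integral_sub (integrable_const _) hint, integral_const,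
    measureReal_kempnerMeasure_univ, integral_average_kempnerMeasure continuousOn_digammaOneAdd,
    digammaOneAdd_zero, discrepancy, hgamma, smul_eq_mul]
  field_simp
  ring

lemma abs_discrepancy_digammaRemainder_div_le [NeZero b] :
    |discrepancy b (fun x => digammaRemainder (x / b))| ≤ 15 * zetaR 4 / (b : ℝ) ^ 5 := by
  have hb : (1 : ℝ) ≤ b := Nat.one_le_cast.2 NeZero.one_le
  have hζ := zetaR_nonneg 4
  have hlip := lipschitzOnWith_digammaRemainder_div (b := b)
  have haverage :=
    abs_discrepancy_le_div_of_lipschitzOnWith (b := b) (lipschitzOnWith_average (b := b) hlip)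
  rw [NNReal.coe_div, NNReal.coe_natCast, Real.coe_toNNReal _ (by positivity)] at haverage
  have hδ (x : ℝ) (hx : x ∈ Icc (0 : ℝ) 1) :
      |digammaRemainder (x / b / b) - digammaRemainder (0 / b)| ≤ 3 * zetaR 4 / (b : ℝ) ^ 6 := by
    have hx0 : 0 ≤ x / b / b := by have := hx.1; positivity
    have hx1 : x / b / b ≤ 1 / (b : ℝ) ^ 2 := by
      rw [div_div, ← pow_two]
      gcongr
      exact hx.2
    rw [zero_div]
    calc |digammaRemainder (x / b / b) - digammaRemainder 0|
        ≤ 3 * (1 / (b : ℝ) ^ 2) ^ 2 * |x / b / b - 0| * zetaR 4 :=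
          abs_digammaRemainder_sub_le ⟨hx0, hx1⟩ ⟨le_rfl, by positivity⟩
      _ ≤ 3 * (1 / (b : ℝ) ^ 2) ^ 2 * (1 / (b : ℝ) ^ 2) * zetaR 4 := by
          rw [sub_zero, abs_of_nonneg hx0]
          gcongr
      _ = 3 * zetaR 4 / (b : ℝ) ^ 6 := by field_simp
  calc |discrepancy b (fun x => digammaRemainder (x / b))|
      ≤ 4 * (3 * zetaR 4 / (b : ℝ) ^ 3 / b) / b + 3 * zetaR 4 / (b : ℝ) ^ 6 :=
        (abs_discrepancy_le_abs_discrepancy_average_add hlip.continuousOn hδ).trans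
          (by gcongr)
    _ ≤ 12 * zetaR 4 / (b : ℝ) ^ 5 + 3 * zetaR 4 / (b : ℝ) ^ 5 := by
        gcongr ?_ + _ / ?_
        · exact le_of_eq (by field_simp; ring)
        · exact pow_le_pow_right₀ hb (by norm_num)
    _ = 15 * zetaR 4 / (b : ℝ) ^ 5 := by ring

lemma discrepancy_digammaOneAdd_div [NeZero b] : discrepancy b (fun x => digammaOneAdd (x / b))
    = zetaR 2 / b * discrepancy b (fun x => x) - zetaR 3 / b ^ 2 * discrepancy b (fun x => x ^ 2)
      + discrepancy b (fun x => digammaRemainder (x / b)) := by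
  have htaylor : (fun x : ℝ => digammaOneAdd (x / b)) = fun x =>
      -Real.eulerMascheroniConstant + (zetaR 2 / b * x
        + (-(zetaR 3 / b ^ 2) * x ^ 2 + digammaRemainder (x / b))) := by
    ext x
    rw [digammaRemainder]
    ring
  have hrem := lipschitzOnWith_digammaRemainder_div (b := b) |>.continuousOn
  have hlinear : ContinuousOn (fun x : ℝ => zetaR 2 / b * x) (Icc 0 1) := by fun_prop
  have hsquare : ContinuousOn (fun x : ℝ => -(zetaR 3 / b ^ 2) * x ^ 2) (Icc 0 1) := by fun_prop
  have hquadratic : ContinuousOn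
      (fun x : ℝ => -(zetaR 3 / b ^ 2) * x ^ 2 + digammaRemainder (x / b)) (Icc 0 1) :=
    hsquare.add hrem
  have hnonconst : ContinuousOn (fun x : ℝ => zetaR 2 / b * x
      + (-(zetaR 3 / b ^ 2) * x ^ 2 + digammaRemainder (x / b))) (Icc 0 1) :=
    hlinear.add hquadratic
  rw [htaylor, discrepancy_add continuousOn_const hnonconst,
    discrepancy_add hlinear hquadratic, discrepancy_add hsquare hrem,
    discrepancy_const, discrepancy_const_mul, discrepancy_const_mul]
  ring

lemma irwinSum_zero_zero_eq_add_remainder (hb : 1 < b) : irwinSum b 0 0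
    = b * Real.log b + b * Real.log (Real.Gamma (1 + 1 / b)) + Real.eulerMascheroniConstant
      - zetaR 2 / (2 * b * ((b : ℝ) ^ 2 - b + 1)) + 5 * zetaR 3 / (6 * b ^ 5)
      + (discrepancy b (fun x => digammaRemainder (x / b)) / b
        - zetaR 3 / b ^ 3 * (discrepancy b (fun x => x ^ 2) + 5 / (6 * b ^ 2))) := by
  have := NeZero.of_gt hb
  have hb0 : (b : ℝ) ≠ 0 := NeZero.ne _
  have hd : (b : ℝ) * (b - 1) + 1 ≠ 0 := by nlinarith [sq_nonneg ((b : ℝ) - 1)]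
  rw [irwinSum_zero_zero_eq_add_discrepancy hb, discrepancy_digammaOneAdd_div, discrepancy_id]
  field_simp
  ring

lemma abs_irwinSum_zero_zero_sub_le (hb : 1 < b) :
    |irwinSum b 0 0 -
      (b * Real.log b + b * Real.log (Real.Gamma (1 + 1 / b)) + Real.eulerMascheroniConstant
        - zetaR 2 / (2 * b * ((b : ℝ) ^ 2 - b + 1)) + 5 * zetaR 3 / (6 * b ^ 5))|
      ≤ (2 * zetaR 3 + 15 * zetaR 4) * ((b : ℝ) ^ 6)⁻¹ := by
  have := NeZero.of_gt hb
  have hb1 : (1 : ℝ) ≤ b := Nat.one_le_cast.2 hb.le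
  have hζ := zetaR_nonneg 3
  set E := discrepancy b (fun x => x ^ 2) + 5 / (6 * (b : ℝ) ^ 2)
  set R := discrepancy b fun x => digammaRemainder (x / b)
  have hE : |E| ≤ 2 / b ^ 3 := by
    refine (abs_discrepancy_sq_add_le b).trans ?_
    gcongr
    norm_num
  have hR : |R| ≤ 15 * zetaR 4 / b ^ 5 := abs_discrepancy_digammaRemainder_div_le
  rw [irwinSum_zero_zero_eq_add_remainder hb, add_sub_cancel_left]
  calc |R / b - zetaR 3 / b ^ 3 * E| ≤ |R| / b + zetaR 3 / b ^ 3 * |E| := by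
        refine (abs_sub _ _).trans_eq ?_
        rw [abs_div, Nat.abs_cast, abs_mul, abs_of_nonneg (div_nonneg hζ (by positivity))]
    _ ≤ 15 * zetaR 4 / b ^ 5 / b + zetaR 3 / b ^ 3 * (2 / b ^ 3) := by gcongr
    _ = (2 * zetaR 3 + 15 * zetaR 4) * ((b : ℝ) ^ 6)⁻¹ := by
        field_simp
        ring

end Asymptotics

end Kempner

theorem kempner_zero_asymptotic_gamma :
    (fun b : ℕ => irwinSum b 0 0 -
      ((b : ℝ) * Real.log b + (b : ℝ) * Real.log (Real.Gamma (1 + 1 / (b : ℝ)))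
        + Real.eulerMascheroniConstant
        - zetaR 2 / (2 * (b : ℝ) * ((b : ℝ) ^ 2 - b + 1))
        + 5 * zetaR 3 / (6 * (b : ℝ) ^ 5)))
      =O[atTop] fun b : ℕ => ((b : ℝ) ^ 6)⁻¹ := by
  refine IsBigO.of_bound (2 * zetaR 3 + 15 * zetaR 4) ?_
  filter_upwards [eventually_gt_atTop 1] with b hb
  rw [Real.norm_eq_abs, Real.norm_of_nonneg (by positivity)]
  exact Kempner.abs_irwinSum_zero_zero_sub_le hb
end

section
/- For all integers b ≥ 2, as b → ∞, I(b,0,1) = b·log b + ζ(2)/(2b³) + ζ(2)/(2b⁴) − (3ζ(2) + 5ζ(3))/(6b⁵) − (3ζ(2) − ζ(4))/(2b⁶) + O(b⁻⁷). -/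
open Filter Asymptotics

/-!
Appending the digit `a` to an integer `n` acts on `x ↦ 1 / (n + x)` as the operator
`T_a f (x) = b⁻¹ f ((a + x) / b)` on continuous functions on the unit interval. Hence
`I(b,0,k) = Λ_k (∑_{0 < a < b} 1 / (a + x))`, where `Λ_k` sums `f ↦ (T_{w₁} ⋯ T_{w_l} f)(0)` over
the digit words `w` with exactly `k` zeros. With `A` the sum of the `T_a` over `a ≠ 0`, these
functionals satisfy `Λ₀ = ev₀ + Λ₀ A` and `Λ_{k+1} = Λ_{k+1} A + Λ_k T₀`.

The multiplication formula of `F y = -ψ(1 + y) - γ` writes `∑_{0 < a < b} 1 / (a + x)` as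
`log b + F - A F - T₀ F`, so the recursion gives
`I(b,0,k+1) = b log b + (Λ_k - Λ_{k+1}) (T₀ F)`. The Taylor coefficients of `F` at `0` are zeta
values, hence only differences of moments of `Λ_k` and `Λ_{k+1}` are needed, and these obey a
triangular linear recursion from which their expansions in powers of `1 / b` follow.
-/

open Finset

open scoped unitInterval

lemma summable_of_le_mul_add {u s : ℕ → ℝ} {q : ℝ} (hq : q < 1) (hu : ∀ n, 0 ≤ u n)
    (hs : Summable s) (hs₀ : ∀ n, 0 ≤ s n) (h : ∀ n, u (n + 1) ≤ q * u n + s n) : Summable u := by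
  refine summable_of_sum_range_le (c := (u 0 + ∑' n, s n) / (1 - q)) hu fun N => ?_
  have hrec : ∑ n ∈ range (N + 1), u n ≤ q * ∑ n ∈ range N, u n + ∑ n ∈ range N, s n + u 0 := by
    rw [sum_range_succ', mul_sum, ← sum_add_distrib]
    gcongr with n
    exact h n
  have hsum : ∑ n ∈ range N, s n ≤ ∑' n, s n := hs.sum_le_tsum _ fun n _ => hs₀ n
  rw [sum_range_succ] at hrec
  rw [le_div_iff₀ (sub_pos.2 hq)]
  linarith [hu N]

section WordFunctional

variable {E : Type*} [NormedAddCommGroup E] [NormedSpace ℝ E] (δ : StrongDual ℝ E) (A B : E →L[ℝ] E)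

/-- The sum of `δ ∘ T₁ ∘ ⋯ ∘ T_l` over the words `T` of length `l` in the two letters `A` and `B` in
which `B` occurs exactly `k` times. -/
noncomputable def levelFunctional : ℕ → ℕ → StrongDual ℝ E
  | 0, 0 => δ
  | 0, _ + 1 => 0
  | l + 1, 0 => levelFunctional l 0 ∘L A
  | l + 1, k + 1 => levelFunctional l (k + 1) ∘L A + levelFunctional l k ∘L B

/-- The sum of `δ ∘ T₁ ∘ ⋯ ∘ T_l` over all finite words `T` in the two letters `A` and `B` in which
`B` occurs exactly `k` times. -/
noncomputable def wordFunctional (k : ℕ) : StrongDual ℝ E := ∑' l, levelFunctional δ A B l k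

variable {A}

lemma summable_norm_levelFunctional (hA : ‖A‖ < 1) (k : ℕ) :
    Summable fun l => ‖levelFunctional δ A B l k‖ := by
  induction k with
  | zero =>
    refine summable_of_le_mul_add hA (fun _ => norm_nonneg _) summable_zero (fun _ => le_rfl)
      fun l => ?_
    rw [add_zero, mul_comm]
    exact ContinuousLinearMap.opNorm_comp_le _ _
  | succ k ih =>
    refine summable_of_le_mul_add hA (fun _ => norm_nonneg _) (ih.mul_right ‖B‖)
      (fun _ => by positivity) fun l => (norm_add_le _ _).trans (add_le_add ?_ ?_)
    · rw [mul_comm]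
      exact ContinuousLinearMap.opNorm_comp_le _ _
    · exact ContinuousLinearMap.opNorm_comp_le _ _

lemma hasSum_levelFunctional (hA : ‖A‖ < 1) (k : ℕ) :
    HasSum (fun l => levelFunctional δ A B l k) (wordFunctional δ A B k) :=
  (summable_norm_levelFunctional δ B hA k).of_norm.hasSum

lemma hasSum_levelFunctional_comp (hA : ‖A‖ < 1) (k : ℕ) (T : E →L[ℝ] E) :
    HasSum (fun l => levelFunctional δ A B l k ∘L T) (wordFunctional δ A B k ∘L T) :=
  (hasSum_levelFunctional δ B hA k).mapL ((ContinuousLinearMap.compL ℝ E E ℝ).flip T)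

lemma wordFunctional_zero (hA : ‖A‖ < 1) :
    wordFunctional δ A B 0 = δ + wordFunctional δ A B 0 ∘L A := by
  refine (hasSum_levelFunctional δ B hA 0).unique ((hasSum_nat_add_iff' 1).1 ?_)
  simpa [levelFunctional] using hasSum_levelFunctional_comp δ B hA 0 A

lemma wordFunctional_succ (hA : ‖A‖ < 1) (k : ℕ) : wordFunctional δ A B (k + 1) =
    wordFunctional δ A B (k + 1) ∘L A + wordFunctional δ A B k ∘L B := by
  refine (hasSum_levelFunctional δ B hA (k + 1)).unique ((hasSum_nat_add_iff' 1).1 ?_)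
  simpa [levelFunctional] using (hasSum_levelFunctional_comp δ B hA (k + 1) A).add
    (hasSum_levelFunctional_comp δ B hA k B)

variable {δ B}

lemma norm_wordFunctional_mul_le {q : ℝ} (hq : 0 < q) (hδ : ‖δ‖ ≤ 1) (hA : ‖A‖ ≤ 1 - q)
    (hB : ‖B‖ ≤ q) (k : ℕ) : ‖wordFunctional δ A B k‖ * q ≤ 1 := by
  have hA₁ : ‖A‖ < 1 := hA.trans_lt (sub_lt_self 1 hq)
  have hcomp {T : E →L[ℝ] E} {c : ℝ} (hT : ‖T‖ ≤ c) (j : ℕ) :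
      ‖wordFunctional δ A B j ∘L T‖ ≤ ‖wordFunctional δ A B j‖ * c :=
    (ContinuousLinearMap.opNorm_comp_le _ _).trans (by gcongr)
  induction k with
  | zero =>
    have h := norm_add_le δ (wordFunctional δ A B 0 ∘L A)
    rw [← wordFunctional_zero δ B hA₁] at h
    linarith [hcomp hA 0]
  | succ k ih =>
    have h := norm_add_le (wordFunctional δ A B (k + 1) ∘L A) (wordFunctional δ A B k ∘L B)
    rw [← wordFunctional_succ δ B hA₁] at h
    linarith [hcomp hA (k + 1), hcomp hB k]

end WordFunctional

section DigitFunctional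

/-- The map `x ↦ (a + x) / b` of the unit interval, which prepends the digit `a` to a base-`b`
expansion. The projection onto `I` only matters when `a` is not a digit. -/
noncomputable def digitMap (b a : ℕ) : C(I, I) where
  toFun x := Set.projIcc 0 1 zero_le_one ((a + x) / b)
  continuous_toFun := continuous_projIcc.comp (by fun_prop)

lemma coe_digitMap {b a : ℕ} (ha : a < b) (x : I) : (digitMap b a x : ℝ) = (a + x) / b := by
  have hb : (0 : ℝ) < b := by exact_mod_cast a.zero_le.trans_lt ha
  have hab : (a : ℝ) + 1 ≤ b := by exact_mod_cast ha
  have hmem : (a + x : ℝ) / b ∈ Set.Icc 0 1 := by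
    have := x.2.1
    refine ⟨by positivity, (div_le_one hb).2 ?_⟩
    linarith [x.2.2]
  rw [digitMap, ContinuousMap.coe_mk, Set.projIcc_of_mem zero_le_one hmem]

/-- The weighted composition operator `f ↦ b⁻¹ f((a + x) / b)` of the digit `a`. -/
noncomputable def digitOp (b a : ℕ) : C(I, ℝ) →L[ℝ] C(I, ℝ) :=
  (b : ℝ)⁻¹ • ⟨(ContinuousMap.compRightAlgHom ℝ ℝ (digitMap b a)).toLinearMap,
    ContinuousMap.compRightAlgHom_continuous ..⟩

lemma digitOp_apply (b a : ℕ) (f : C(I, ℝ)) (x : I) :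
    digitOp b a f x = (b : ℝ)⁻¹ * f (digitMap b a x) := rfl

lemma norm_digitOp_le (b a : ℕ) : ‖digitOp b a‖ ≤ (b : ℝ)⁻¹ := by
  refine ContinuousLinearMap.opNorm_le_bound _ (by positivity) fun f => ?_
  refine (ContinuousMap.norm_le _ (by positivity)).2 fun x => ?_
  rw [digitOp_apply, norm_mul, Real.norm_of_nonneg (by positivity)]
  gcongr
  exact f.norm_coe_le_norm _

/-- The sum of the operators of all base-`b` digits different from `d`. -/
noncomputable def avoidOp (b d : ℕ) : C(I, ℝ) →L[ℝ] C(I, ℝ) :=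
  ∑ a ∈ (range b).erase d, digitOp b a

lemma avoidOp_apply (b d : ℕ) (f : C(I, ℝ)) :
    avoidOp b d f = ∑ a ∈ (range b).erase d, digitOp b a f := sum_apply ..

lemma card_erase_range {b d : ℕ} (hd : d < b) : (#((range b).erase d) : ℝ) = b - 1 := by
  rw [card_erase_of_mem (mem_range.2 hd), card_range, Nat.cast_pred (by lia)]

lemma norm_avoidOp_le {b d : ℕ} (hd : d < b) : ‖avoidOp b d‖ ≤ 1 - (b : ℝ)⁻¹ := by
  have hb : (b : ℝ) ≠ 0 := by norm_cast; lia
  have hsum : ∑ _ ∈ (range b).erase d, (b : ℝ)⁻¹ = 1 - (b : ℝ)⁻¹ := by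
    rw [sum_const, nsmul_eq_mul, card_erase_range hd]
    field_simp
  rw [← hsum, avoidOp]
  refine (norm_sum_le _ (digitOp b)).trans ?_
  gcongr
  exact norm_digitOp_le b _

/-- Summation of `b⁻ˡ f(0.w₁…w_l)` over the words `w` of `l` base-`b` digits in which `d` occurs
exactly `k` times. -/
noncomputable abbrev digitLevelFunctional (b d l k : ℕ) : StrongDual ℝ C(I, ℝ) :=
  levelFunctional (ContinuousMap.evalCLM ℝ 0) (avoidOp b d) (digitOp b d) l k

/-- Summation of `b⁻ˡ f(0.w₁…w_l)` over all finite words `w` of base-`b` digits in which `d` occurs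
exactly `k` times. -/
noncomputable def digitFunctional (b d k : ℕ) : StrongDual ℝ C(I, ℝ) :=
  wordFunctional (ContinuousMap.evalCLM ℝ 0) (avoidOp b d) (digitOp b d) k

lemma norm_avoidOp_lt_one {b d : ℕ} (hd : d < b) : ‖avoidOp b d‖ < 1 :=
  (norm_avoidOp_le hd).trans_lt
    (sub_lt_self _ (inv_pos.2 (by exact_mod_cast d.zero_le.trans_lt hd)))

lemma hasSum_digitLevelFunctional {b d : ℕ} (hd : d < b) (k : ℕ) (f : C(I, ℝ)) :
    HasSum (fun l => digitLevelFunctional b d l k f) (digitFunctional b d k f) :=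
  (hasSum_levelFunctional _ _ (norm_avoidOp_lt_one hd) k).mapL (ContinuousLinearMap.apply ℝ ℝ f)

lemma digitFunctional_zero {b d : ℕ} (hd : d < b) (f : C(I, ℝ)) :
    digitFunctional b d 0 f = f 0 + digitFunctional b d 0 (avoidOp b d f) :=
  DFunLike.congr_fun (wordFunctional_zero _ _ (norm_avoidOp_lt_one hd)) f

lemma digitFunctional_succ {b d : ℕ} (hd : d < b) (k : ℕ) (f : C(I, ℝ)) :
    digitFunctional b d (k + 1) f =
      digitFunctional b d (k + 1) (avoidOp b d f) + digitFunctional b d k (digitOp b d f) :=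
  DFunLike.congr_fun (wordFunctional_succ _ _ (norm_avoidOp_lt_one hd) k) f

lemma norm_digitFunctional_le {b d : ℕ} (hd : d < b) (k : ℕ) : ‖digitFunctional b d k‖ ≤ b := by
  have hb : (0 : ℝ) < b := by exact_mod_cast d.zero_le.trans_lt hd
  have heval : ‖(ContinuousMap.evalCLM ℝ 0 : StrongDual ℝ C(I, ℝ))‖ ≤ 1 :=
    ContinuousLinearMap.opNorm_le_bound _ zero_le_one fun f => by
      simpa using f.norm_coe_le_norm 0
  rw [← div_le_one hb, div_eq_mul_inv]
  exact norm_wordFunctional_mul_le (inv_pos.2 hb) heval (norm_avoidOp_le hd) (norm_digitOp_le b d) k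

lemma digitOp_one (b a : ℕ) : digitOp b a 1 = (b : ℝ)⁻¹ • 1 := rfl

lemma avoidOp_one {b d : ℕ} (hd : d < b) : avoidOp b d 1 = (1 - (b : ℝ)⁻¹) • 1 := by
  have hb : (b : ℝ) ≠ 0 := by norm_cast; lia
  simp only [avoidOp_apply, digitOp_one, sum_const, ← Nat.cast_smul_eq_nsmul ℝ,
    card_erase_range hd, smul_smul]
  congr 1
  field_simp

lemma digitFunctional_one {b d : ℕ} (hd : d < b) (k : ℕ) : digitFunctional b d k 1 = b := by
  have hb : (b : ℝ) ≠ 0 := by norm_cast; lia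
  suffices digitFunctional b d k 1 * (b : ℝ)⁻¹ = 1 by field_simp at this; exact this
  induction k with
  | zero =>
    have h := digitFunctional_zero hd 1
    rw [avoidOp_one hd, map_smul, smul_eq_mul, ContinuousMap.one_apply] at h
    linarith
  | succ k ih =>
    have h := digitFunctional_succ hd k 1
    rw [avoidOp_one hd, digitOp_one, map_smul, map_smul, smul_eq_mul, smul_eq_mul] at h
    linarith

end DigitFunctional

section Recip

/-- The function `x ↦ 1 / (n + x)` on the unit interval for `n ≠ 0`, and `0` for `n = 0`. -/
noncomputable def recip (n : ℕ) : C(I, ℝ) where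
  toFun x := if n = 0 then 0 else ((n : ℝ) + x)⁻¹
  continuous_toFun := by
    rcases n.eq_zero_or_pos with rfl | hn
    · simpa only [if_true] using continuous_const
    · simp only [hn.ne', if_false]
      refine Continuous.inv₀ (by fun_prop) fun x => ?_
      have := x.2.1
      positivity

lemma recip_apply {n : ℕ} (hn : n ≠ 0) (x : I) : recip n x = ((n : ℝ) + x)⁻¹ := if_neg hn

@[simp] lemma recip_zero : recip 0 = 0 := rfl

lemma recip_apply_zero (n : ℕ) : recip n 0 = (n : ℝ)⁻¹ := by
  rcases eq_or_ne n 0 with rfl | hn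
  · simp
  · simp [recip_apply hn]

lemma digitOp_recip {b a n : ℕ} (ha : a < b) (hn : n ≠ 0) :
    digitOp b a (recip n) = recip (n * b + a) := by
  ext x
  have hb : b ≠ 0 := by lia
  rw [digitOp_apply, recip_apply hn, recip_apply (by positivity), coe_digitMap ha, ← mul_inv]
  congr 1
  push_cast
  field_simp
  ring

end Recip

section Blocks

lemma sum_range_mul {M : Type*} [AddCommMonoid M] (f : ℕ → M) (n b : ℕ) :
    ∑ m ∈ range (n * b), f m = ∑ i ∈ range n, ∑ j ∈ range b, f (i * b + j) := by
  induction n with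
  | zero => simp
  | succ n ih => rw [add_one_mul, sum_range_add, ih, sum_range_succ]

/-- The term of index `m` of the series defining `irwinSum b d k`. -/
noncomputable def irwinTerm (b d k m : ℕ) : ℝ :=
  if 0 < m ∧ (Nat.digits b m).count d = k then 1 / m else 0

lemma irwinTerm_nonneg (b d k m : ℕ) : 0 ≤ irwinTerm b d k m := by
  rw [irwinTerm]
  positivity

/-- The sum of the terms of `irwinSum b d k` over the integers whose base-`b` expansion is that of
`n` followed by `l` further digits. -/
noncomputable def prefixSum (b d k n l : ℕ) : ℝ :=
  ∑ r ∈ range (b ^ l), irwinTerm b d k (n * b ^ l + r)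

lemma prefixSum_succ (b d k n l : ℕ) :
    prefixSum b d k n (l + 1) = ∑ a ∈ range b, prefixSum b d k (n * b + a) l := by
  simp only [prefixSum, pow_succ', sum_range_mul]
  congr! 3
  ring

lemma count_digits_mul_add {b d n a : ℕ} (hb : 1 < b) (hn : n ≠ 0) (ha : a < b) :
    (Nat.digits b (n * b + a)).count d = (Nat.digits b n).count d + if a = d then 1 else 0 := by
  rw [show n * b + a = a + b * n by ring, Nat.digits_add b hb a n ha (.inr hn), List.count_cons]
  simp only [beq_iff_eq]

lemma prefixSum_of_lt_count {b d k n : ℕ} (hb : 1 < b) (hn : n ≠ 0)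
    (hk : k < (Nat.digits b n).count d) (l : ℕ) : prefixSum b d k n l = 0 := by
  induction l generalizing n with
  | zero => simp [prefixSum, irwinTerm, hk.ne']
  | succ l ih =>
    rw [prefixSum_succ]
    refine sum_eq_zero fun a ha => ih (by positivity) ?_
    rw [count_digits_mul_add hb hn (mem_range.1 ha)]
    exact hk.trans_le (Nat.le_add_right _ _)

lemma prefixSum_count_add {b d n : ℕ} (hb : 1 < b) (hd : d < b) (hn : n ≠ 0) (j l : ℕ) :
    prefixSum b d ((Nat.digits b n).count d + j) n l = digitLevelFunctional b d l j (recip n) := by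
  induction l generalizing n j with
  | zero =>
    cases j <;>
      simp [prefixSum, irwinTerm, levelFunctional, recip_apply_zero, Nat.pos_of_ne_zero hn]
  | succ l ih =>
    have hne (a : ℕ) : n * b + a ≠ 0 := by positivity
    have havoid (j : ℕ) :
        ∑ a ∈ (range b).erase d, prefixSum b d ((Nat.digits b n).count d + j) (n * b + a) l =
          digitLevelFunctional b d l j (avoidOp b d (recip n)) := by
      rw [avoidOp_apply, map_sum]
      refine sum_congr rfl fun a ha => ?_
      obtain ⟨had, hab⟩ := mem_erase.1 ha
      rw [mem_range] at hab
      rw [digitOp_recip hab hn, ← ih (hne a), count_digits_mul_add hb hn hab, if_neg had, add_zero]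
    rw [prefixSum_succ, ← sum_erase_add _ _ (mem_range.2 hd), havoid]
    have hcount := count_digits_mul_add (d := d) hb hn hd
    rw [if_pos rfl] at hcount
    cases j with
    | zero =>
      rw [prefixSum_of_lt_count hb (hne d) (by lia), add_zero]
      rfl
    | succ j =>
      rw [← add_assoc, add_right_comm, ← hcount, ih (hne d), ← digitOp_recip hd hn]
      rfl

end Blocks

section IrwinSum

lemma sum_range_pow_irwinTerm {b : ℕ} (hb : 1 < b) (k N : ℕ) :
    ∑ m ∈ range (b ^ N), irwinTerm b 0 k m =
      ∑ l ∈ range N, digitLevelFunctional b 0 l k (∑ a ∈ range b, recip a) := by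
  induction N with
  | zero => simp [irwinTerm]
  | succ N ih =>
    have hsplit : ∑ m ∈ range (b ^ (N + 1)), irwinTerm b 0 k m =
        ∑ a ∈ range b, prefixSum b 0 k a N := by
      rw [pow_succ', sum_range_mul]
      rfl
    have hdigit (a : ℕ) (ha : a ∈ (range b).erase 0) : prefixSum b 0 k a N =
        digitLevelFunctional b 0 N k (recip a) := by
      obtain ⟨ha₀, hab⟩ := mem_erase.1 ha
      have hcount : (Nat.digits b a).count 0 = 0 := by
        rw [Nat.digits_of_lt b a ha₀ (mem_range.1 hab)]
        simp [ha₀]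
      rw [← prefixSum_count_add hb (by lia) ha₀, hcount, zero_add]
    rw [hsplit, sum_range_succ, ← ih, map_sum, ← sum_erase_add _ _ (mem_range.2 (by lia : 0 < b)),
      sum_congr rfl hdigit, add_comm, ← sum_erase (range b) (a := 0) (by simp)]
    simp [prefixSum]

theorem irwinSum_zero_eq_digitFunctional {b : ℕ} (hb : 1 < b) (k : ℕ) :
    irwinSum b 0 k = digitFunctional b 0 k (∑ a ∈ range b, recip a) := by
  have hmono : Monotone fun M => ∑ m ∈ range M, irwinTerm b 0 k m :=
    (sum_mono_set_of_nonneg (irwinTerm_nonneg b 0 k)).comp range_mono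
  refine ((hasSum_iff_tendsto_nat_of_nonneg (irwinTerm_nonneg b 0 k) _).2 ?_).tsum_eq
  refine (tendsto_iff_tendsto_subseq_of_monotone hmono
    (tendsto_pow_atTop_atTop_of_one_lt hb)).2 ?_
  simp only [Function.comp_def, sum_range_pow_irwinTerm hb]
  exact (hasSum_digitLevelFunctional (by lia) k _).tendsto_sum_nat

end IrwinSum

section RecipSum

open scoped Topology

lemma norm_recip_sub_le (n : ℕ) : ‖recip n - (n : ℝ)⁻¹ • 1‖ ≤ 1 / (n : ℝ) ^ 2 := by
  refine (ContinuousMap.norm_le _ (by positivity)).2 fun x => ?_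
  rcases eq_or_ne n 0 with rfl | hn
  · simp
  have hx := x.2.1
  have hdiff : recip n x - (n : ℝ)⁻¹ = -(x / (n * (n + x))) := by
    rw [recip_apply hn]
    field_simp
    ring
  simp only [ContinuousMap.sub_apply, ContinuousMap.smul_apply, ContinuousMap.one_apply,
    smul_eq_mul, mul_one, hdiff, norm_neg, Real.norm_eq_abs]
  rw [abs_of_nonneg (by positivity), div_le_div_iff₀ (by positivity) (by positivity)]
  nlinarith [x.2.2]

lemma summable_recip_sub : Summable fun n : ℕ => recip n - (n : ℝ)⁻¹ • 1 :=
  .of_norm_bounded (Real.summable_one_div_nat_pow.2 one_lt_two) norm_recip_sub_le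

/-- The function `y ↦ ∑_{n ≥ 1} (1 / (n + y) - 1 / n) = -ψ(1 + y) - γ` on the unit interval, where
`ψ` is the digamma function. -/
noncomputable def recipSum : C(I, ℝ) := ∑' n : ℕ, (recip n - (n : ℝ)⁻¹ • 1)

lemma hasSum_recip_sub : HasSum (fun n : ℕ => recip n - (n : ℝ)⁻¹ • 1) recipSum :=
  summable_recip_sub.hasSum

lemma sum_range_inv_eq (M : ℕ) : ∑ m ∈ range M, (m : ℝ)⁻¹ = harmonic M - (M : ℝ)⁻¹ := by
  rw [eq_sub_iff_add_eq, ← sum_range_succ, sum_range_succ']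
  simp [harmonic]

lemma tendsto_sum_range_mul_inv_sub {b : ℕ} (hb : b ≠ 0) :
    Tendsto (fun N : ℕ => ∑ m ∈ range (N * b), (m : ℝ)⁻¹ - ∑ n ∈ range N, (n : ℝ)⁻¹) atTop
      (𝓝 (Real.log b)) := by
  have hγ : Tendsto (fun M : ℕ => ∑ m ∈ range M, (m : ℝ)⁻¹ - Real.log M) atTop
      (𝓝 Real.eulerMascheroniConstant) := by
    simpa [sum_range_inv_eq, sub_right_comm] using
      Real.tendsto_harmonic_sub_log.sub tendsto_inv_atTop_nhds_zero_nat
  have hmul : Tendsto (fun N : ℕ => N * b) atTop atTop := tendsto_id.atTop_mul_const' (by lia)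
  have h := ((hγ.comp hmul).sub hγ).add_const (Real.log b)
  rw [sub_self, zero_add] at h
  refine h.congr' ?_
  filter_upwards [eventually_ne_atTop 0] with N hN
  simp only [Function.comp_apply]
  rw [Nat.cast_mul, Real.log_mul (by positivity) (by positivity)]
  ring

lemma sum_digitOp_one {b : ℕ} (hb : b ≠ 0) : ∑ a ∈ range b, digitOp b a 1 = 1 := by
  simp [digitOp_one, ← Nat.cast_smul_eq_nsmul ℝ, smul_smul, hb]

lemma sum_digitOp_recip {b n : ℕ} (hn : n ≠ 0) :
    ∑ a ∈ range b, digitOp b a (recip n) = ∑ a ∈ range b, recip (n * b + a) :=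
  sum_congr rfl fun _ ha => digitOp_recip (mem_range.1 ha) hn

lemma sum_range_mul_recip (b : ℕ) {N : ℕ} (hN : N ≠ 0) :
    ∑ m ∈ range (N * b), recip m =
      ∑ a ∈ range b, recip a + ∑ a ∈ range b, digitOp b a (∑ n ∈ range N, recip n) := by
  obtain ⟨N, rfl⟩ := Nat.exists_eq_add_one_of_ne_zero hN
  simp only [map_sum]
  rw [sum_comm, sum_range_mul, sum_range_succ', sum_range_succ', sum_congr rfl fun n _ =>
    sum_digitOp_recip n.succ_ne_zero]
  simp [add_comm]

/-- The analogue for `recipSum` of the multiplication formula of the digamma function. -/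
lemma recipSum_eq {b : ℕ} (hb : b ≠ 0) : recipSum =
    ∑ a ∈ range b, recip a - Real.log b • 1 + ∑ a ∈ range b, digitOp b a recipSum := by
  have hlim := hasSum_recip_sub.tendsto_sum_nat
  have hmul : Tendsto (fun N : ℕ => N * b) atTop atTop := tendsto_id.atTop_mul_const' (by lia)
  have hop : Tendsto (fun N => ∑ a ∈ range b, digitOp b a
      (∑ n ∈ range N, (recip n - (n : ℝ)⁻¹ • 1))) atTop
      (𝓝 (∑ a ∈ range b, digitOp b a recipSum)) :=
    tendsto_finsetSum _ fun a _ => ((digitOp b a).continuous.tendsto _).comp hlim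
  have hlog := (tendsto_sum_range_mul_inv_sub hb).smul_const (1 : C(I, ℝ))
  refine tendsto_nhds_unique (hlim.comp hmul) (((hlog.const_sub _).add hop).congr' ?_)
  filter_upwards [eventually_ne_atTop 0] with N hN
  simp only [Function.comp_apply, sum_sub_distrib, sum_range_mul_recip b hN, ← sum_smul, map_sub,
    map_smul, ← smul_sum, sum_digitOp_one hb]
  module

theorem irwinSum_zero_succ {b : ℕ} (hb : 1 < b) (k : ℕ) : irwinSum b 0 (k + 1) =
    b * Real.log b + digitFunctional b 0 k (digitOp b 0 recipSum) -
      digitFunctional b 0 (k + 1) (digitOp b 0 recipSum) := by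
  have hb₀ : 0 < b := by lia
  have hsum : ∑ a ∈ range b, recip a =
      recipSum + Real.log b • 1 - (avoidOp b 0 recipSum + digitOp b 0 recipSum) := by
    rw [avoidOp_apply, sum_erase_add _ _ (mem_range.2 hb₀), eq_sub_iff_add_eq]
    nth_rw 2 [recipSum_eq hb₀.ne']
    module
  rw [irwinSum_zero_eq_digitFunctional hb, hsum, map_sub, map_add, map_add, map_smul,
    digitFunctional_one hb₀, digitFunctional_succ hb₀ k recipSum, smul_eq_mul]
  ring

end RecipSum

section Expansion

/-- The coordinate function `x ↦ x` on the unit interval. -/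
def coord : C(I, ℝ) := ⟨Subtype.val, continuous_subtype_val⟩

lemma coord_pow_apply (m : ℕ) (x : I) : (coord ^ m) x = (x : ℝ) ^ m := rfl

lemma hasSum_zetaR_s2 {s : ℕ} (hs : 2 ≤ s) :
    HasSum (fun n : ℕ => 1 / ((n : ℝ) + 1) ^ s) (zetaR s) := by
  refine Summable.hasSum ?_
  simpa using (summable_nat_add_iff 1).2 (Real.summable_one_div_nat_pow.2 (by lia : 1 < s))

lemma zetaR_nonneg (s : ℕ) : 0 ≤ zetaR s := tsum_nonneg fun _ => by positivity

lemma hasSum_recipSum (y : I) :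
    HasSum (fun n : ℕ => 1 / (((n : ℝ) + 1) + y) - 1 / ((n : ℝ) + 1)) (recipSum y) := by
  have h := (hasSum_nat_add_iff' 1).2 (hasSum_recip_sub.mapL (ContinuousMap.evalCLM ℝ y))
  simpa [recip_apply] using h

lemma inv_add_sub_geom {n y : ℝ} (hn : 0 < n) (hy : 0 ≤ y) {J : ℕ} (hJ : 1 ≤ J) :
    1 / (n + y) - 1 / n - ∑ j ∈ Ico 1 J, (-1) ^ j * y ^ j * (1 / n ^ (j + 1)) =
      (-1) ^ J * y ^ J / (n ^ J * (n + y)) := by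
  induction J, hJ using Nat.le_induction with
  | base =>
    simp only [Ico_self, sum_empty, sub_zero, pow_one]
    field_simp
    ring
  | succ J hJ ih =>
    rw [sum_Ico_succ_top hJ, ← sub_sub, ih]
    field_simp
    ring

lemma abs_recipSum_sub_le (y : I) {J : ℕ} (hJ : 1 ≤ J) :
    |recipSum y - ∑ j ∈ Ico 1 J, (-1) ^ j * (y : ℝ) ^ j * zetaR (j + 1)| ≤
      (y : ℝ) ^ J * zetaR (J + 1) := by
  have hy := y.2.1
  have hζ : HasSum
      (fun n : ℕ => ∑ j ∈ Ico 1 J, (-1) ^ j * (y : ℝ) ^ j * (1 / ((n : ℝ) + 1) ^ (j + 1)))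
      (∑ j ∈ Ico 1 J, (-1) ^ j * (y : ℝ) ^ j * zetaR (j + 1)) :=
    hasSum_sum fun j hj => (hasSum_zetaR_s2 (by have := (mem_Ico.1 hj).1; lia)).mul_left _
  rw [← Real.norm_eq_abs]
  refine ((hasSum_recipSum y).sub hζ).norm_le_of_bounded
    ((hasSum_zetaR_s2 (by lia : 2 ≤ J + 1)).mul_left _) fun n => ?_
  rw [inv_add_sub_geom (by positivity) hy hJ, norm_div, norm_mul, norm_pow, norm_neg, norm_one,
    one_pow, one_mul, Real.norm_of_nonneg (by positivity), Real.norm_of_nonneg (by positivity),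
    mul_one_div, pow_succ ((n : ℝ) + 1)]
  gcongr _ / (_ * ?_)
  exact le_add_of_nonneg_right hy

lemma norm_digitOp_recipSum_sub_le {b : ℕ} (hb : 0 < b) {J : ℕ} (hJ : 1 ≤ J) :
    ‖digitOp b 0 recipSum - ∑ j ∈ Ico 1 J, ((-1) ^ j * zetaR (j + 1) / b ^ (j + 1)) • coord ^ j‖ ≤
      zetaR (J + 1) / b ^ (J + 1) := by
  have hζ := zetaR_nonneg (J + 1)
  refine (ContinuousMap.norm_le _ (by positivity)).2 fun x => ?_
  have hx := x.2.1
  have hy : (digitMap b 0 x : ℝ) = x / b := by simp [coe_digitMap hb]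
  have hscale : (digitOp b 0 recipSum -
      ∑ j ∈ Ico 1 J, ((-1) ^ j * zetaR (j + 1) / b ^ (j + 1)) • coord ^ j) x = (b : ℝ)⁻¹ *
      (recipSum (digitMap b 0 x) -
        ∑ j ∈ Ico 1 J, (-1) ^ j * (digitMap b 0 x : ℝ) ^ j * zetaR (j + 1)) := by
    rw [ContinuousMap.sub_apply, digitOp_apply, ContinuousMap.sum_apply, mul_sub, mul_sum]
    congr 1
    refine sum_congr rfl fun j _ => ?_
    rw [ContinuousMap.smul_apply, coord_pow_apply, hy, smul_eq_mul, div_pow, pow_succ]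
    field_simp
  calc _ ≤ (b : ℝ)⁻¹ * ((x / b) ^ J * zetaR (J + 1)) := by
        rw [hscale, norm_mul, Real.norm_of_nonneg (by positivity), ← hy]
        gcongr
        exact abs_recipSum_sub_le _ hJ
    _ ≤ (b : ℝ)⁻¹ * ((1 / b) ^ J * zetaR (J + 1)) := by
        gcongr
        exact x.2.2
    _ = zetaR (J + 1) / b ^ (J + 1) := by
        rw [one_div_pow, pow_succ]
        field_simp

/-- The moments of the functional `digitFunctional b 0 k`. -/
noncomputable def moment (b k m : ℕ) : ℝ := digitFunctional b 0 k (coord ^ m)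

theorem abs_irwinSum_sub_moment_le {b : ℕ} (hb : 1 < b) (k : ℕ) {J : ℕ} (hJ : 1 ≤ J) :
    |irwinSum b 0 (k + 1) - (b * Real.log b - ∑ j ∈ Ico 1 J,
      (-1) ^ j * zetaR (j + 1) / b ^ (j + 1) * (moment b (k + 1) j - moment b k j))| ≤
      2 * zetaR (J + 1) / b ^ J := by
  have hb₀ : 0 < b := by lia
  set P := ∑ j ∈ Ico 1 J, ((-1) ^ j * zetaR (j + 1) / b ^ (j + 1)) • coord ^ j with hP
  set R := digitOp b 0 recipSum - P with hR
  have hmoment (i : ℕ) : digitFunctional b 0 i P =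
      ∑ j ∈ Ico 1 J, (-1) ^ j * zetaR (j + 1) / b ^ (j + 1) * moment b i j := by
    simp only [hP, map_sum, map_smul, smul_eq_mul, moment]
  have hbound (i : ℕ) : |digitFunctional b 0 i R| ≤ zetaR (J + 1) / b ^ J := calc
    _ ≤ b * (zetaR (J + 1) / b ^ (J + 1)) :=
      (digitFunctional b 0 i).le_of_opNorm_le_of_le (norm_digitFunctional_le hb₀ i)
        (norm_digitOp_recipSum_sub_le hb₀ hJ)
    _ = zetaR (J + 1) / b ^ J := by rw [pow_succ]; field_simp
  have hsplit : irwinSum b 0 (k + 1) - (b * Real.log b - ∑ j ∈ Ico 1 J,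
      (-1) ^ j * zetaR (j + 1) / b ^ (j + 1) * (moment b (k + 1) j - moment b k j)) =
      digitFunctional b 0 k R - digitFunctional b 0 (k + 1) R := by
    simp only [irwinSum_zero_succ hb, hR, map_sub, hmoment, mul_sub, sum_sub_distrib]
    ring
  rw [hsplit, two_mul, add_div]
  exact (abs_sub _ _).trans (add_le_add (hbound k) (hbound (k + 1)))

end Expansion

section Moments

/-- The power sums of the nonzero base-`b` digits. -/
noncomputable def digitPowerSum (b i : ℕ) : ℝ := ∑ a ∈ (range b).erase 0, (a : ℝ) ^ i

lemma digitPowerSum_zero {b : ℕ} (hb : 0 < b) : digitPowerSum b 0 = b - 1 := by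
  simp [digitPowerSum, card_erase_range hb]

lemma digitPowerSum_of_ne_zero (b : ℕ) {i : ℕ} (hi : i ≠ 0) :
    digitPowerSum b i = ∑ a ∈ range b, (a : ℝ) ^ i :=
  sum_erase _ (by simp [hi])

lemma digitPowerSum_one (b : ℕ) : digitPowerSum b 1 = b * (b - 1) / 2 := by
  rw [digitPowerSum_of_ne_zero b one_ne_zero]
  induction b with
  | zero => simp
  | succ b ih =>
    rw [sum_range_succ, ih]
    push_cast
    ring

lemma digitPowerSum_two (b : ℕ) : digitPowerSum b 2 = b * (b - 1) * (2 * b - 1) / 6 := by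
  rw [digitPowerSum_of_ne_zero b two_ne_zero]
  induction b with
  | zero => simp
  | succ b ih =>
    rw [sum_range_succ, ih]
    push_cast
    ring

lemma abs_digitPowerSum_le (b i : ℕ) : |digitPowerSum b i| ≤ (b : ℝ) ^ (i + 1) := by
  have hnonneg : 0 ≤ digitPowerSum b i := sum_nonneg fun _ _ => by positivity
  rw [abs_of_nonneg hnonneg]
  calc digitPowerSum b i ≤ ∑ a ∈ range b, (a : ℝ) ^ i :=
        sum_le_sum_of_subset_of_nonneg (erase_subset _ _) fun _ _ _ => by positivity
    _ ≤ ∑ _ ∈ range b, (b : ℝ) ^ i := by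
        gcongr with a ha
        exact (mem_range.1 ha).le
    _ = (b : ℝ) ^ (i + 1) := by rw [sum_const, card_range, nsmul_eq_mul, pow_succ']

lemma pow_mul_digitOp_coord_pow {b a : ℕ} (ha : a < b) (m : ℕ) (x : I) :
    (b : ℝ) ^ (m + 1) * digitOp b a (coord ^ m) x = (a + x) ^ m := by
  have hb : (b : ℝ) ≠ 0 := by norm_cast; lia
  rw [digitOp_apply, coord_pow_apply, coe_digitMap ha, div_pow, pow_succ]
  field_simp

lemma pow_smul_avoidOp_coord_pow (b m : ℕ) : (b : ℝ) ^ (m + 1) • avoidOp b 0 (coord ^ m) =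
    ∑ j ∈ range (m + 1), (m.choose j * digitPowerSum b (m - j)) • coord ^ j := by
  ext x
  simp only [avoidOp_apply, ContinuousMap.smul_apply, ContinuousMap.sum_apply, coord_pow_apply,
    smul_eq_mul, digitPowerSum, mul_sum, sum_mul]
  rw [sum_comm]
  refine sum_congr rfl fun a ha => ?_
  rw [pow_mul_digitOp_coord_pow (mem_range.1 (mem_of_mem_erase ha)), add_comm, add_pow]
  exact sum_congr rfl fun j _ => by ring

lemma pow_mul_digitFunctional_avoidOp (b k m : ℕ) :
    (b : ℝ) ^ (m + 1) * digitFunctional b 0 k (avoidOp b 0 (coord ^ m)) =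
      ∑ j ∈ range (m + 1), m.choose j * digitPowerSum b (m - j) * moment b k j := by
  rw [← smul_eq_mul, ← map_smul, pow_smul_avoidOp_coord_pow, map_sum]
  simp only [map_smul, smul_eq_mul, moment]

lemma pow_mul_digitFunctional_digitOp {b : ℕ} (hb : 0 < b) (k m : ℕ) :
    (b : ℝ) ^ (m + 1) * digitFunctional b 0 k (digitOp b 0 (coord ^ m)) = moment b k m := by
  rw [← smul_eq_mul, ← map_smul, moment]
  congr 1
  ext x
  refine (pow_mul_digitOp_coord_pow hb m x).trans ?_
  rw [Nat.cast_zero, zero_add, coord_pow_apply]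

lemma moment_zero_right {b : ℕ} (hb : 0 < b) (k : ℕ) : moment b k 0 = b := by
  rw [moment, pow_zero, digitFunctional_one hb]

lemma abs_moment_le {b : ℕ} (hb : 0 < b) (k m : ℕ) : |moment b k m| ≤ b := by
  have hcoord : ‖coord ^ m‖ ≤ 1 := (ContinuousMap.norm_le _ zero_le_one).2 fun x => by
    rw [coord_pow_apply, norm_pow, Real.norm_of_nonneg x.2.1]
    exact pow_le_one₀ x.2.1 x.2.2
  rw [moment, ← Real.norm_eq_abs]
  simpa only [mul_one] using
    (digitFunctional b 0 k).le_of_opNorm_le_of_le (norm_digitFunctional_le hb k) hcoord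

lemma mul_moment_zero {b m : ℕ} (hb : 0 < b) (hm : m ≠ 0) :
    ((b : ℝ) ^ (m + 1) - b + 1) * moment b 0 m =
      ∑ j ∈ range m, m.choose j * digitPowerSum b (m - j) * moment b 0 j := by
  have hrec : moment b 0 m = digitFunctional b 0 0 (avoidOp b 0 (coord ^ m)) := by
    rw [moment, digitFunctional_zero hb, coord_pow_apply, Set.Icc.coe_zero, zero_pow hm, zero_add]
  have h := pow_mul_digitFunctional_avoidOp b 0 m
  rw [← hrec, sum_range_succ, Nat.choose_self, Nat.sub_self, digitPowerSum_zero hb] at h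
  linear_combination h

lemma mul_moment_succ {b : ℕ} (hb : 0 < b) (k m : ℕ) :
    ((b : ℝ) ^ (m + 1) - b + 1) * moment b (k + 1) m =
      ∑ j ∈ range m, m.choose j * digitPowerSum b (m - j) * moment b (k + 1) j + moment b k m := by
  have h := pow_mul_digitFunctional_avoidOp b (k + 1) m
  have hrec := digitFunctional_succ hb k (coord ^ m)
  rw [sum_range_succ, Nat.choose_self, Nat.sub_self, digitPowerSum_zero hb] at h
  have hdigit := pow_mul_digitFunctional_digitOp hb k m
  rw [← moment] at hrec
  linear_combination h + hdigit + (b : ℝ) ^ (m + 1) * hrec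

/-- The difference of the moments of order `m` attached to one and to zero occurrences of the digit
`0`. -/
noncomputable def momentGap (b m : ℕ) : ℝ := moment b 1 m - moment b 0 m

lemma momentGap_zero {b : ℕ} (hb : 0 < b) : momentGap b 0 = 0 := by
  rw [momentGap, moment_zero_right hb, moment_zero_right hb, sub_self]

lemma mul_momentGap {b m : ℕ} (hb : 0 < b) (hm : m ≠ 0) :
    ((b : ℝ) ^ (m + 1) - b + 1) * momentGap b m =
      ∑ j ∈ range m, m.choose j * digitPowerSum b (m - j) * momentGap b j + moment b 0 m := by
  simp only [momentGap, mul_sub, sum_sub_distrib]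
  linear_combination mul_moment_succ hb 0 m - mul_moment_zero hb hm

end Moments

section BigOPow

/-- `f b = O(b ^ n)` as `b → ∞`, for an integer exponent `n`. -/
def BigOPow (f : ℕ → ℝ) (n : ℤ) : Prop := f =O[atTop] fun b : ℕ => (b : ℝ) ^ n

lemma pow_succ_le_two_mul {b m : ℕ} (hb : 2 ≤ b) (hm : m ≠ 0) :
    (b : ℝ) ^ (m + 1) ≤ 2 * (b ^ (m + 1) - b + 1) := by
  have hb' : (2 : ℝ) ≤ b := by exact_mod_cast hb
  have hpow : (b : ℝ) ^ 2 ≤ b ^ (m + 1) := pow_le_pow_right₀ (by linarith) (by lia)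
  nlinarith

namespace BigOPow

variable {f g : ℕ → ℝ} {m n : ℤ}

lemma of_abs_le (h : ∀ b : ℕ, b ≠ 0 → |f b| ≤ (b : ℝ) ^ n) : BigOPow f n := by
  refine .of_bound' ?_
  filter_upwards [eventually_ne_atTop 0] with b hb
  exact (h b hb).trans (le_abs_self _)

lemma congr (hg : BigOPow g n) (h : ∀ b : ℕ, 2 ≤ b → f b = g b) : BigOPow f n := by
  refine IsBigO.congr' hg ?_ .rfl
  filter_upwards [eventually_ge_atTop 2] with b hb
  exact (h b hb).symm

lemma mono (hf : BigOPow f m) (hmn : m ≤ n) : BigOPow f n := by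
  refine IsBigO.trans hf (of_abs_le fun b hb => ?_)
  rw [abs_of_nonneg (by positivity)]
  exact zpow_le_zpow_right₀ (by exact_mod_cast Nat.one_le_iff_ne_zero.2 hb) hmn

lemma add (hf : BigOPow f n) (hg : BigOPow g n) : BigOPow (fun b => f b + g b) n :=
  IsBigO.add hf hg

lemma sub (hf : BigOPow f n) (hg : BigOPow g n) : BigOPow (fun b => f b - g b) n :=
  IsBigO.sub hf hg

lemma const_mul (c : ℝ) (hf : BigOPow f n) : BigOPow (fun b => c * f b) n :=
  IsBigO.const_mul_left hf c

lemma mul (hf : BigOPow f m) (hg : BigOPow g n) : BigOPow (fun b => f b * g b) (m + n) := by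
  refine IsBigO.congr' (IsBigO.mul hf hg) .rfl ?_
  filter_upwards [eventually_ne_atTop 0] with b hb
  exact (zpow_add₀ (by positivity) m n).symm

lemma sum {ι : Type*} {s : Finset ι} {F : ι → ℕ → ℝ} (h : ∀ i ∈ s, BigOPow (F i) n) :
    BigOPow (fun b => ∑ i ∈ s, F i b) n :=
  IsBigO.fun_sum h

lemma zpow (n : ℤ) : BigOPow (fun b : ℕ => (b : ℝ) ^ n) n := isBigO_refl _ _

lemma of_mul_left {m : ℕ} (hm : m ≠ 0)
    (h : BigOPow (fun b => ((b : ℝ) ^ (m + 1) - b + 1) * f b) n) : BigOPow f (n - (m + 1)) := by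
  have hinv : BigOPow (fun b : ℕ => ((b : ℝ) ^ (m + 1) - b + 1)⁻¹) (-(m + 1)) := by
    refine .of_bound 2 ?_
    filter_upwards [eventually_ge_atTop 2] with b hb
    have hpos : (0 : ℝ) < b ^ (m + 1) := by positivity
    have hle := pow_succ_le_two_mul hb hm
    have hzpow : (b : ℝ) ^ ((m : ℤ) + 1) = b ^ (m + 1) := by norm_cast
    rw [norm_inv, norm_zpow, Real.norm_natCast, zpow_neg, hzpow, Real.norm_of_nonneg (by linarith),
      inv_le_iff_one_le_mul₀ (by linarith), mul_right_comm, ← div_eq_mul_inv, one_le_div hpos]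
    exact hle
  rw [sub_eq_neg_add]
  refine (hinv.mul h).congr fun b hb => ?_
  have hpos : (0 : ℝ) < b ^ (m + 1) := by positivity
  rw [inv_mul_cancel_left₀]
  linarith [pow_succ_le_two_mul hb hm]

end BigOPow

end BigOPow

section MomentAsymptotics

lemma bigOPow_digitPowerSum (i : ℕ) : BigOPow (fun b => digitPowerSum b i) (i + 1) :=
  .of_abs_le fun b _ => by exact_mod_cast abs_digitPowerSum_le b i

lemma bigOPow_moment (k m : ℕ) : BigOPow (fun b => moment b k m) 1 :=
  .of_abs_le fun b hb => by simpa using abs_moment_le (Nat.pos_of_ne_zero hb) k m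

lemma mul_moment_zero_one {b : ℕ} (hb : 0 < b) :
    ((b : ℝ) ^ 2 - b + 1) * moment b 0 1 = b ^ 2 * (b - 1) / 2 := by
  have h := mul_moment_zero hb one_ne_zero
  simp only [sum_range_one, Nat.choose_zero_right, Nat.cast_one, Nat.sub_zero, digitPowerSum_one,
    moment_zero_right hb] at h
  linear_combination h

lemma mul_moment_zero_two {b : ℕ} (hb : 0 < b) : ((b : ℝ) ^ 3 - b + 1) * moment b 0 2 =
    b * (b - 1) * moment b 0 1 + b ^ 2 * (b - 1) * (2 * b - 1) / 6 := by
  have h := mul_moment_zero hb two_ne_zero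
  simp only [sum_range_succ, sum_range_zero, Nat.choose_zero_right, Nat.choose_one_right,
    Nat.cast_one, Nat.cast_ofNat, Nat.sub_zero, Nat.add_one_sub_one, digitPowerSum_one,
    digitPowerSum_two, moment_zero_right hb] at h
  linear_combination h

lemma mul_momentGap_one {b : ℕ} (hb : 0 < b) :
    ((b : ℝ) ^ 2 - b + 1) * momentGap b 1 = moment b 0 1 := by
  simpa [momentGap_zero hb] using mul_momentGap hb one_ne_zero

lemma mul_momentGap_two {b : ℕ} (hb : 0 < b) : ((b : ℝ) ^ 3 - b + 1) * momentGap b 2 =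
    b * (b - 1) * momentGap b 1 + moment b 0 2 := by
  have h := mul_momentGap hb two_ne_zero
  simp only [sum_range_succ, sum_range_zero, Nat.choose_one_right, Nat.cast_ofNat,
    Nat.add_one_sub_one, digitPowerSum_one, momentGap_zero hb] at h
  linear_combination h

lemma mul_momentGap_three {b : ℕ} (hb : 0 < b) : ((b : ℝ) ^ 4 - b + 1) * momentGap b 3 =
    b * (b - 1) * (2 * b - 1) / 2 * momentGap b 1 + 3 * (b * (b - 1) / 2) * momentGap b 2 +
      moment b 0 3 := by
  have h := mul_momentGap hb three_ne_zero
  simp only [sum_range_succ, sum_range_zero, Nat.choose_one_right, Nat.choose_succ_self_right,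
    Nat.cast_ofNat, Nat.reduceAdd, Nat.reduceSub, digitPowerSum_one, digitPowerSum_two,
    momentGap_zero hb] at h
  linear_combination h

lemma bigOPow_momentGap_one : BigOPow (fun b => momentGap b 1) (-1) :=
  (((bigOPow_moment 0 1).congr fun _ hb => mul_momentGap_one (by lia)).of_mul_left
    one_ne_zero).mono (by norm_num)

lemma bigOPow_momentGap {m : ℕ} (hm : 2 ≤ m) : BigOPow (fun b => momentGap b m) (-2) := by
  induction m using Nat.strong_induction_on with
  | _ m ih =>
    have hlower (j : ℕ) (hj : j ∈ range m) : BigOPow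
        (fun b => m.choose j * digitPowerSum b (m - j) * momentGap b j) (m - 1) := by
      rcases j with _ | _ | j
      · exact ((BigOPow.zpow (m - 1)).const_mul 0).congr fun b hb => by
          simp [momentGap_zero (by lia : 0 < b)]
      · refine (((bigOPow_digitPowerSum _).const_mul _).mul bigOPow_momentGap_one).mono ?_
        lia
      · have hjm := mem_range.1 hj
        refine (((bigOPow_digitPowerSum _).const_mul _).mul (ih (j + 2) hjm (by lia))).mono ?_
        lia
    have hrec := (BigOPow.sum hlower).add ((bigOPow_moment 0 m).mono (by lia))
    refine ((hrec.congr fun b hb => mul_momentGap (by lia) (by lia)).of_mul_left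
      (by lia)).mono (by lia)

lemma bigOPow_moment_zero_one_sub : BigOPow (fun b => moment b 0 1 - b / 2) (-1) := by
  refine ((((BigOPow.zpow 1).const_mul (-1 / 2)).congr fun b hb => ?_).of_mul_left
    one_ne_zero).mono (by norm_num)
  rw [zpow_one]
  linear_combination mul_moment_zero_one (b := b) (by lia)

lemma bigOPow_moment_zero_two_sub : BigOPow (fun b => moment b 0 2 - b / 3) (-2) := by
  have h := ((BigOPow.zpow 2).mul bigOPow_moment_zero_one_sub).sub
    ((BigOPow.zpow 1).mul bigOPow_moment_zero_one_sub |>.mono (by norm_num)) |>.sub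
    ((BigOPow.zpow 1).const_mul (1 / 3))
  refine ((h.congr fun b hb => ?_).of_mul_left two_ne_zero).mono (by norm_num)
  rw [zpow_one, zpow_ofNat]
  linear_combination mul_moment_zero_two (b := b) (by lia)

lemma bigOPow_momentGap_one_sub : BigOPow (fun b : ℕ => momentGap b 1 -
    (1 / (2 * (b : ℝ)) + 1 / (2 * (b : ℝ) ^ 2) - 1 / (2 * (b : ℝ) ^ 3) - 3 / (2 * (b : ℝ) ^ 4)))
    (-5) := by
  have h := ((BigOPow.zpow (-1)).const_mul (-1)) |>.add
    (((BigOPow.zpow (-2)).const_mul 3).mono (by norm_num)) |>.add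
    (((BigOPow.zpow (-3)).const_mul (-5 / 2)).mono (by norm_num)) |>.add
    (((BigOPow.zpow (-4)).const_mul (3 / 2)).mono (by norm_num))
  refine (((h.congr fun b hb => ?_).of_mul_left one_ne_zero).of_mul_left one_ne_zero).mono
    (by norm_num)
  have hsq : ((b : ℝ) ^ 2 - b + 1) * (((b : ℝ) ^ 2 - b + 1) * momentGap b 1) =
      b ^ 2 * (b - 1) / 2 := by
    rw [mul_momentGap_one (by lia), mul_moment_zero_one (by lia)]
  norm_num only [Nat.reduceAdd]
  rw [mul_sub, mul_sub, hsq]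
  simp only [zpow_neg, zpow_ofNat]
  field_simp
  ring

lemma bigOPow_momentGap_one_sub_two_terms :
    BigOPow (fun b : ℕ => momentGap b 1 - (1 / (2 * (b : ℝ)) + 1 / (2 * (b : ℝ) ^ 2))) (-3) := by
  refine ((bigOPow_momentGap_one_sub.mono (by norm_num)).sub (((BigOPow.zpow (-3)).const_mul
    (1 / 2)).add (((BigOPow.zpow (-4)).const_mul (3 / 2)).mono (by norm_num)))).congr fun b _ => ?_
  simp only [zpow_neg, zpow_ofNat]
  field_simp
  ring

lemma bigOPow_momentGap_one_sub_one_term :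
    BigOPow (fun b : ℕ => momentGap b 1 - 1 / (2 * (b : ℝ))) (-2) := by
  refine ((bigOPow_momentGap_one_sub_two_terms.mono (by norm_num)).add
    ((BigOPow.zpow (-2)).const_mul (1 / 2))).congr fun b _ => ?_
  simp only [zpow_neg, zpow_ofNat]
  field_simp
  ring

lemma bigOPow_momentGap_two_sub :
    BigOPow (fun b : ℕ => momentGap b 2 - 5 / (6 * (b : ℝ) ^ 2)) (-4) := by
  have h := (((BigOPow.zpow 2).sub ((BigOPow.zpow 1).mono (by norm_num))).mul
    bigOPow_momentGap_one_sub_two_terms).add (bigOPow_moment_zero_two_sub.mono (by norm_num)) |>.add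
    ((BigOPow.zpow (-1)).const_mul (1 / 3)) |>.sub
    (((BigOPow.zpow (-2)).const_mul (5 / 6)).mono (by norm_num))
  refine ((h.congr fun b hb => ?_).of_mul_left two_ne_zero).mono (by norm_num)
  rw [mul_sub, mul_momentGap_two (by lia)]
  simp only [zpow_neg, zpow_ofNat]
  field_simp
  ring

lemma bigOPow_momentGap_three_sub :
    BigOPow (fun b : ℕ => momentGap b 3 - 1 / (2 * (b : ℝ) ^ 2)) (-3) := by
  have h := ((BigOPow.zpow 3).mul bigOPow_momentGap_one_sub_one_term).sub
    (((((BigOPow.zpow 2).const_mul (3 / 2)).sub (((BigOPow.zpow 1).const_mul (1 / 2)).mono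
      (by norm_num))).mul bigOPow_momentGap_one).mono (by norm_num)) |>.add
    ((((BigOPow.zpow 2).sub ((BigOPow.zpow 1).mono (by norm_num))).mul
      (bigOPow_momentGap le_rfl)).const_mul (3 / 2) |>.mono (by norm_num)) |>.add
    (bigOPow_moment 0 3) |>.add
    (((BigOPow.zpow (-1)).const_mul (1 / 2)).mono (by norm_num)) |>.sub
    (((BigOPow.zpow (-2)).const_mul (1 / 2)).mono (by norm_num))
  refine ((h.congr fun b hb => ?_).of_mul_left three_ne_zero).mono (by norm_num)
  rw [mul_sub, mul_momentGap_three (by lia)]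
  simp only [zpow_neg, zpow_ofNat]
  field_simp
  ring

end MomentAsymptotics

theorem bigOPow_irwinSum_sub {J : ℕ} (hJ : 1 ≤ J) : BigOPow (fun b => irwinSum b 0 1 -
    (b * Real.log b - ∑ j ∈ Ico 1 J, (-1) ^ j * zetaR (j + 1) / b ^ (j + 1) * momentGap b j))
    (-J) := by
  refine .of_bound (2 * zetaR (J + 1)) ?_
  filter_upwards [eventually_gt_atTop 1] with b hb
  refine (abs_irwinSum_sub_moment_le hb 0 hJ).trans_eq ?_
  rw [zpow_neg, zpow_natCast, norm_inv, norm_pow, Real.norm_natCast, div_eq_mul_inv]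

theorem irwin_zero_one_asymptotic :
    (fun b : ℕ => irwinSum b 0 1 -
      ((b : ℝ) * Real.log b + zetaR 2 / (2 * (b : ℝ) ^ 3) + zetaR 2 / (2 * (b : ℝ) ^ 4)
        - (3 * zetaR 2 + 5 * zetaR 3) / (6 * (b : ℝ) ^ 5)
        - (3 * zetaR 2 - zetaR 4) / (2 * (b : ℝ) ^ 6)))
      =O[atTop] fun b : ℕ => ((b : ℝ) ^ 7)⁻¹ := by
  have hterm {f : ℕ → ℝ} {n : ℤ} (j : ℕ) (hf : BigOPow f n) (hn : n - (j + 1) ≤ -7) :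
      BigOPow (fun b => (-1) ^ j * zetaR (j + 1) * (((b : ℝ) ^ (j + 1))⁻¹ * f b)) (-7) := by
    have hpow : BigOPow (fun b => ((b : ℝ) ^ (j + 1))⁻¹) (-(j + 1)) :=
      (BigOPow.zpow _).congr fun b _ => by rw [zpow_neg]; norm_cast
    exact ((hpow.mul hf).const_mul _).mono (by linarith)
  have h := (bigOPow_irwinSum_sub (by norm_num : 1 ≤ 7)).sub
    (hterm 1 bigOPow_momentGap_one_sub (by norm_num)) |>.sub
    (hterm 2 bigOPow_momentGap_two_sub (by norm_num)) |>.sub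
    (hterm 3 bigOPow_momentGap_three_sub (by norm_num)) |>.sub
    (hterm 4 (bigOPow_momentGap (by norm_num : 2 ≤ 4)) (by norm_num)) |>.sub
    (hterm 5 (bigOPow_momentGap (by norm_num : 2 ≤ 5)) (by norm_num)) |>.sub
    (hterm 6 (bigOPow_momentGap (by norm_num : 2 ≤ 6)) (by norm_num))
  have hpow : (fun b : ℕ => ((b : ℝ) ^ 7)⁻¹) = fun b : ℕ => (b : ℝ) ^ (-7 : ℤ) := by
    simp only [zpow_neg, zpow_ofNat]
  rw [hpow]
  refine h.congr fun b _ => ?_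
  norm_num only [sum_Ico_succ_top, Ico_self, sum_empty, Nat.reduceAdd]
  field_simp
  ring
end
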